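/- arXiv:1801.08565 — 5 statements merged into one kernel-verified Lean document; each statement's English description precedes it below -/
import Mathlib

section
/- Every sequence of n ≥ 8 distinct real numbers contains a (not necessarily contiguous) subsequence of length at least ⌈n/2⌉ that is a rollercoaster. -/
/-- `IsRun t i j` says that the contiguous block `t i, t (i+1), …, t j` is a
*run* of the finite sequence `t`: it is strictly increasing or strictly
decreasing, and it is maximal with this property among contiguous blocks. -/
def IsRun {m : ℕ} (t : Fin m → ℝ) (i j : Fin m) : Prop :=
  i ≤ j ∧
  (StrictMonoOn t (Set.Icc i j) ∨ StrictAntiOn t (Set.Icc i j)) ∧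
  ∀ i' j' : Fin m, i' ≤ i → j ≤ j' → (i ≠ i' ∨ j ≠ j') →
    ¬ (StrictMonoOn t (Set.Icc i' j') ∨ StrictAntiOn t (Set.Icc i' j'))

/-- A *rollercoaster* is a finite sequence of distinct real numbers with at
least three terms in which every run has length (`j - i + 1`) at least 3. -/
def IsRollercoaster {m : ℕ} (t : Fin m → ℝ) : Prop :=
  3 ≤ m ∧ Function.Injective t ∧
  ∀ i j : Fin m, IsRun t i j → (i : ℕ) + 2 ≤ (j : ℕ)

/-! A subsequence is stored backwards as a function `a : ℕ → ℕ` listing its indices from the last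
one to the first. The proof scans the sequence from left to right and maintains an invariant, valid
up to the symmetry `s ↦ -s`, about lengths of rollercoasters whose last run is increasing or
decreasing; a finite search shows that the invariant is reached after at most eight terms. -/

namespace Rollercoaster

/-- The step from `a (q + 1)` to `a q` lies in a run with at least three terms. -/
def InLongRun (s : ℕ → ℝ) (a : ℕ → ℕ) (m q : ℕ) : Prop :=
  (q + 2 < m ∧ 0 < (s (a q) - s (a (q + 1))) * (s (a (q + 1)) - s (a (q + 2)))) ∨
  (1 ≤ q ∧ 0 < (s (a (q - 1)) - s (a q)) * (s (a q) - s (a (q + 1))))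

/-- There is a subsequence of length `m` ending at index `i` with an ascent, all of whose runs have
at least three terms, except possibly the last one if `full` is false. -/
def Climb (s : ℕ → ℝ) (full : Prop) (i m : ℕ) : Prop :=
  ∃ a : ℕ → ℕ, a 0 = i ∧ 2 ≤ m ∧ (∀ q, q + 1 < m → a (q + 1) < a q) ∧ s (a 1) < s (a 0) ∧
    ∀ q, q + 1 < m → (q = 0 → full) → InLongRun s a m q

lemma Climb.pair {s : ℕ → ℝ} {i j : ℕ} (hij : j < i) (h : s j < s i) : Climb s False i 2 := by
  refine ⟨fun q => if q = 0 then i else j, by simp, le_rfl, ?_, by simpa using h, ?_⟩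
  · intro q hq
    obtain rfl : q = 0 := by omega
    simpa using hij
  · intro q hq h0
    exact (h0 (by omega)).elim

lemma Climb.ascend {s : ℕ → ℝ} {full : Prop} {i j m : ℕ} (hc : Climb s full j m) (hij : j < i)
    (h : s j < s i) : Climb s True i (m + 1) := by
  obtain ⟨a, rfl, hm, hlt, hup, hrun⟩ := hc
  refine ⟨fun q => Nat.casesOn q i a, rfl, by omega, ?_, h, ?_⟩
  · rintro (_ | q) hq
    · exact hij
    · exact hlt q (by omega)
  · have hpos : 0 < (s i - s (a 0)) * (s (a 0) - s (a 1)) :=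
      mul_pos (by linarith) (by linarith)
    rintro (_ | _ | q) hq -
    · exact Or.inl ⟨by omega, hpos⟩
    · exact Or.inr ⟨le_rfl, hpos⟩
    · rcases hrun (q + 1) (by omega) (by omega) with ⟨h1, h2⟩ | ⟨h1, h2⟩
      · exact Or.inl ⟨by omega, h2⟩
      · exact Or.inr ⟨by omega, h2⟩

lemma Climb.turn {s : ℕ → ℝ} {i j m : ℕ} (hc : Climb s True j m) (hij : j < i)
    (h : s i < s j) : Climb (-s) False i (m + 1) := by
  obtain ⟨a, rfl, hm, hlt, hup, hrun⟩ := hc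
  refine ⟨fun q => Nat.casesOn q i a, rfl, by omega, ?_, neg_lt_neg h, ?_⟩
  · rintro (_ | q) hq
    · exact hij
    · exact hlt q (by omega)
  · rintro (_ | _ | q) hq h0
    · exact (h0 rfl).elim
    · rcases hrun 0 (by omega) (fun _ => trivial) with ⟨h1, h2⟩ | ⟨h1, h2⟩
      · refine Or.inl ⟨by omega, ?_⟩
        simp only [Pi.neg_apply]
        linarith
      · omega
    · rcases hrun (q + 1) (by omega) (by omega) with ⟨h1, h2⟩ | ⟨h1, h2⟩
      · refine Or.inl ⟨by omega, ?_⟩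
        simp only [Pi.neg_apply]
        linarith
      · refine Or.inr ⟨by omega, ?_⟩
        simp only [Pi.neg_apply, Nat.add_sub_cancel] at h2 ⊢
        linarith

/-- Among the first `t` terms, `x` is the end of a subsequence with last run increasing whose
adjusted length is at least `l`: a first run with fewer than three terms loses one of its terms. -/
def Up (s : ℕ → ℝ) (t : ℕ) (x : ℝ) (l : ℕ) : Prop :=
  ∃ i < t, s i = x ∧
    ((∃ m, l ≤ m ∧ Climb s True i m) ∨ l = 0 ∨ (l = 1 ∧ ∃ j < i, s j < s i))

/-- As `Up`, but the last run may consist of two terms only. -/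
def WeakUp (s : ℕ → ℝ) (t : ℕ) (x : ℝ) (l : ℕ) : Prop :=
  Up s t x l ∨ ∃ i < t, s i = x ∧ ∃ m, l ≤ m ∧ Climb s False i m

/-- The mirror image of `Up`. -/
def Down (s : ℕ → ℝ) (t : ℕ) (x : ℝ) (l : ℕ) : Prop := Up (-s) t (-x) l

/-- The mirror image of `WeakUp`. -/
def WeakDown (s : ℕ → ℝ) (t : ℕ) (x : ℝ) (l : ℕ) : Prop := WeakUp (-s) t (-x) l

section basic

variable {s : ℕ → ℝ} {t k l : ℕ} {x v : ℝ}

lemma Up.succ (h : Up s t x l) : Up s (t + 1) x l := by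
  obtain ⟨i, hi, h⟩ := h
  exact ⟨i, by omega, h⟩

lemma WeakUp.succ (h : WeakUp s t x l) : WeakUp s (t + 1) x l := by
  rcases h with h | ⟨i, hi, h⟩
  · exact Or.inl h.succ
  · exact Or.inr ⟨i, by omega, h⟩

lemma Up.mono (h : Up s t x l) (hkl : k ≤ l) : Up s t x k := by
  obtain ⟨i, hi, hx, ⟨m, hm, h⟩ | h | ⟨h, h'⟩⟩ := h
  · exact ⟨i, hi, hx, Or.inl ⟨m, by omega, h⟩⟩
  · exact ⟨i, hi, hx, Or.inr (Or.inl (by omega))⟩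
  · rcases Nat.eq_zero_or_pos k with hk | hk
    · exact ⟨i, hi, hx, Or.inr (Or.inl hk)⟩
    · exact ⟨i, hi, hx, Or.inr (Or.inr ⟨by omega, h'⟩)⟩

lemma WeakUp.mono (h : WeakUp s t x l) (hkl : k ≤ l) : WeakUp s t x k := by
  rcases h with h | ⟨i, hi, hx, m, hm, h⟩
  · exact Or.inl (h.mono hkl)
  · exact Or.inr ⟨i, hi, hx, m, by omega, h⟩

lemma Up.zero : Up s (t + 1) (s t) 0 := ⟨t, by omega, rfl, Or.inr (Or.inl rfl)⟩

lemma WeakUp.up (h : WeakUp s t v l) (hv : v < s t) : Up s (t + 1) (s t) (l + 1) := by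
  rcases h with ⟨i, hi, rfl, ⟨m, hm, h⟩ | rfl | ⟨rfl, j, hj, h⟩⟩ | ⟨i, hi, rfl, m, hm, h⟩
  · exact ⟨t, by omega, rfl, Or.inl ⟨m + 1, by omega, h.ascend hi hv⟩⟩
  · exact ⟨t, by omega, rfl, Or.inr (Or.inr ⟨rfl, i, hi, hv⟩)⟩
  · exact ⟨t, by omega, rfl, Or.inl ⟨3, by omega, (Climb.pair hj h).ascend hi hv⟩⟩
  · exact ⟨t, by omega, rfl, Or.inl ⟨m + 1, by omega, h.ascend hi hv⟩⟩

lemma weakUp_two {i : ℕ} (hi : i < t) (h : s i < s t) : WeakUp s (t + 1) (s t) 2 :=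
  Or.inr ⟨t, by omega, rfl, 2, le_rfl, Climb.pair hi h⟩

lemma Up.weakDown (h : Up s t v l) (hv : s t < v) : WeakDown s (t + 1) (s t) (l + 1) := by
  obtain ⟨i, hi, rfl, h⟩ := h
  by_cases hl : l ≤ 1
  · have := weakUp_two (s := -s) hi (neg_lt_neg hv)
    exact this.mono (by omega)
  · rcases h with ⟨m, hm, h⟩ | h | h
    · exact Or.inr ⟨t, by omega, rfl, m + 1, by omega, h.turn hi hv⟩
    · omega
    · omega

lemma Down.weakUp (h : Down s t v l) (hv : v < s t) : WeakUp s (t + 1) (s t) (l + 1) := by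
  simpa [WeakDown] using Up.weakDown (s := -s) h (neg_lt_neg hv)

lemma WeakDown.down (h : WeakDown s t v l) (hv : s t < v) : Down s (t + 1) (s t) (l + 1) :=
  WeakUp.up (s := -s) h (neg_lt_neg hv)

lemma Down.succ (h : Down s t x l) : Down s (t + 1) x l := Up.succ h
lemma WeakDown.succ (h : WeakDown s t x l) : WeakDown s (t + 1) x l := WeakUp.succ h
lemma Down.mono (h : Down s t x l) (hkl : k ≤ l) : Down s t x k := Up.mono h hkl
lemma WeakDown.mono (h : WeakDown s t x l) (hkl : k ≤ l) : WeakDown s t x k := WeakUp.mono h hkl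
lemma Up.weak (h : Up s t x l) : WeakUp s t x l := Or.inl h
lemma Down.weak (h : Down s t x l) : WeakDown s t x l := Or.inl h

@[simp] lemma down_neg : Down (-s) t (-x) l ↔ Up s t x l := by simp [Down]
@[simp] lemma up_neg : Up (-s) t (-x) l ↔ Down s t x l := Iff.rfl
@[simp] lemma weakDown_neg : WeakDown (-s) t (-x) l ↔ WeakUp s t x l := by simp [WeakDown]
@[simp] lemma weakUp_neg : WeakUp (-s) t (-x) l ↔ WeakDown s t x l := Iff.rfl

lemma Up.exists_eq (h : Up s t x l) : ∃ i < t, s i = x := by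
  obtain ⟨i, hi, hx, -⟩ := h
  exact ⟨i, hi, hx⟩

lemma WeakUp.exists_eq (h : WeakUp s t x l) : ∃ i < t, s i = x := by
  rcases h with h | ⟨i, hi, hx, -⟩
  · exact h.exists_eq
  · exact ⟨i, hi, hx⟩

lemma Up.ne (h : Up s t x l) (hs : ∀ i < t, s i ≠ s t) : x ≠ s t := by
  obtain ⟨i, hi, rfl⟩ := h.exists_eq
  exact hs i hi

lemma WeakUp.ne (h : WeakUp s t x l) (hs : ∀ i < t, s i ≠ s t) : x ≠ s t := by
  obtain ⟨i, hi, rfl⟩ := h.exists_eq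
  exact hs i hi

lemma Down.ne (h : Down s t x l) (hs : ∀ i < t, s i ≠ s t) : x ≠ s t := fun e =>
  Up.ne h (fun i hi e' => hs i hi (neg_injective e')) (congrArg Neg.neg e)

end basic

/-- The invariant of the scan, up to the symmetry `s ↦ -s`. -/
inductive State (s : ℕ → ℝ) (t : ℕ) : Prop
  | balanced {u v : ℝ} {a b : ℕ} (hu : Up s t u a) (hv : Down s t v b) (hab : t + 1 ≤ a + b)
  | inside {u v x : ℝ} {a b : ℕ} (hvx : v < x) (hxu : x < u) (hu : Up s t u a)
      (hv : Down s t v b) (hxd : WeakDown s t x (a + 1)) (hxu' : WeakUp s t x (b + 1))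
      (hab : t ≤ a + b)
  | descending {v y : ℝ} {a b : ℕ} (hvy : v < y) (hv : Down s t v b) (hy : Down s t y a)
      (hyu : WeakUp s t y (b + 1)) (hab : t ≤ a + b)
  | below {z y : ℝ} {a b d : ℕ} (hzy : z < y) (hz : Down s t z d) (hyd : WeakDown s t y a)
      (hyu : WeakUp s t y b) (hdb : t + 1 ≤ d + b) (had : t ≤ a + d) (hd : t ≤ 2 * d)
  | lopsided {v w : ℝ} {m r : ℕ} (hv : Down s t v m) (hw : Up s t w r) (ht : t ≤ m + r)
      (hm : r + 2 ≤ m)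
  | lopsidedAbove {v w : ℝ} {m r : ℕ} (hvw : v < w) (hv : Down s t v m) (hw : Up s t w r)
      (hw' : WeakUp s t w (r + 1)) (ht : t ≤ m + r) (hm : r + 1 ≤ m)
  | lopsidedInside {v y : ℝ} {m r : ℕ} (hvy : v < y) (hv : Down s t v m)
      (hyu : WeakUp s t y (m + 1)) (hyd : WeakDown s t y r) (ht : t ≤ m + r) (hm : r ≤ m)
  | long {v w : ℝ} {m : ℕ} (hv : Down s t v m) (hwu : WeakUp s t w 2) (hwd : WeakDown s t w 2)
      (ht : t ≤ m + 2) (hm : 5 ≤ m)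

lemma State.succ {s : ℕ → ℝ} {t : ℕ} (h : State s t) (hs : ∀ i < t, s i ≠ s t) :
    State s (t + 1) ∨ State (-s) (t + 1) := by
  cases h with
  | balanced hu hv hab =>
    left
    rcases (hu.ne hs).lt_or_gt with h | h
    · exact .balanced (hu.weak.up h) hv.succ (by omega)
    rcases (hv.ne hs).lt_or_gt with h' | h'
    · exact .inside h' h hu.succ hv.succ (hu.weakDown h) (hv.weakUp h') (by omega)
    · exact .balanced hu.succ (hv.weak.down h') (by omega)
  | @inside u v x a b hvx hxu hu hv hxd hxu' hab =>
    rcases (hxu'.ne hs).lt_or_gt with h | h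
    · right
      have hup := hxu'.up h
      rcases (hu.ne hs).lt_or_gt with h' | h'
      · refine .below (z := -s t) (y := -x) (d := max (b + 2) (a + 1)) (a := b + 1) (b := a + 1)
          (neg_lt_neg h) ?_ (weakDown_neg.2 hxu'.succ) (weakUp_neg.2 hxd.succ) (by omega)
          (by omega) (by omega)
        rw [down_neg]
        rcases max_choice (b + 2) (a + 1) with e | e <;> rw [e]
        · exact hup
        · exact hu.weak.up h'
      · exact .descending (v := -u) (y := -s t) (neg_lt_neg h') (down_neg.2 hu.succ)
          (down_neg.2 hup) (weakUp_neg.2 (hu.weakDown h')) (by omega)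
    · left
      have hdown := hxd.down h
      rcases (hv.ne hs).lt_or_gt with h' | h'
      · exact .descending h' hv.succ hdown (hv.weakUp h') (by omega)
      · refine .below (z := s t) (y := x) (d := max (a + 2) (b + 1)) h ?_ hxd.succ hxu'.succ
          (by omega) (by omega) (by omega)
        rcases max_choice (a + 2) (b + 1) with e | e <;> rw [e]
        · exact hdown
        · exact hv.weak.down h'
  | @descending v y a b hvy hv hy hyu hab =>
    left
    rcases (hy.ne hs).lt_or_gt with h | h
    · exact .balanced (hyu.up h) hy.succ (by omega)
    rcases (hv.ne hs).lt_or_gt with h' | h'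
    · exact .descending h' hv.succ (hy.weak.down h) (hv.weakUp h') (by omega)
    · refine .below (z := s t) (y := y) (d := max (a + 1) (b + 1)) h ?_ hy.succ.weak hyu.succ
        (by omega) (by omega) (by omega)
      rcases max_choice (a + 1) (b + 1) with e | e <;> rw [e]
      · exact hy.weak.down h
      · exact hv.weak.down h'
  | below hzy hz hyd hyu hdb had hd =>
    left
    rcases (hyu.ne hs).lt_or_gt with h | h
    · exact .balanced (hyu.up h) hz.succ (by omega)
    rcases (hz.ne hs).lt_or_gt with h' | h'
    · exact .descending h' hz.succ (hyd.down h) (hz.weakUp h') (by omega)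
    · exact .below (h'.trans hzy) (hz.weak.down h') hyd.succ hyu.succ (by omega) (by omega)
        (by omega)
  | lopsided hv hw ht hm =>
    left
    rcases (hv.ne hs).lt_or_gt with h | h
    · rcases (hw.ne hs).lt_or_gt with h' | h'
      · exact .lopsidedAbove h hv.succ (hw.weak.up h') ((hv.weakUp h).mono (by omega)) (by omega)
          (by omega)
      · exact .lopsidedInside h hv.succ (hv.weakUp h) (hw.weakDown h') (by omega) (by omega)
    · exact .lopsided (hv.weak.down h) hw.succ (by omega) (by omega)
  | lopsidedAbove hvw hv hw hw' ht hm =>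
    left
    rcases (hw.ne hs).lt_or_gt with h | h
    · exact .balanced (hw'.up h) hv.succ (by omega)
    rcases (hv.ne hs).lt_or_gt with h' | h'
    · exact .lopsidedInside h' hv.succ (hv.weakUp h') (hw.weakDown h) (by omega) (by omega)
    · exact .lopsidedAbove (h'.trans hvw) (hv.weak.down h') hw.succ hw'.succ (by omega) (by omega)
  | lopsidedInside hvy hv hyu hyd ht hm =>
    left
    rcases (hyu.ne hs).lt_or_gt with h | h
    · exact .balanced (hyu.up h) hv.succ (by omega)
    rcases (hv.ne hs).lt_or_gt with h' | h'
    · exact .descending h' hv.succ (hyd.down h) (hv.weakUp h') (by omega)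
    · exact .below h (hv.weak.down h') hyd.succ hyu.succ (by omega) (by omega) (by omega)
  | long hv hwu hwd ht hm =>
    left
    rcases (hwu.ne hs).lt_or_gt with h | h
    · exact .lopsided hv.succ (hwu.up h) (by omega) (by omega)
    rcases (hv.ne hs).lt_or_gt with h' | h'
    · exact .descending h' hv.succ (hwd.down h) (hv.weakUp h') (by omega)
    · exact .long (hv.weak.down h') hwu.succ hwd.succ (by omega) (by omega)

lemma State.exists_long {s : ℕ → ℝ} {t : ℕ} (h : State s t) :
    ∃ x l, t ≤ 2 * l ∧ (Up s t x l ∨ Down s t x l) := by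
  have key : ∀ {u v : ℝ} {a b : ℕ}, Up s t u a → Down s t v b → t ≤ a + b →
      ∃ x l, t ≤ 2 * l ∧ (Up s t x l ∨ Down s t x l) := by
    intro u v a b hu hv hab
    rcases le_total a b with h | h
    · exact ⟨v, b, by omega, Or.inr hv⟩
    · exact ⟨u, a, by omega, Or.inl hu⟩
  cases h with
  | balanced hu hv hab => exact key hu hv (by omega)
  | inside hvx hxu hu hv hxd hxu' hab => exact key hu hv hab
  | @descending v y a b hvy hv hy hyu hab =>
    rcases le_total a b with h | h
    · exact ⟨v, b, by omega, Or.inr hv⟩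
    · exact ⟨y, a, by omega, Or.inr hy⟩
  | below hzy hz hyd hyu hdb had hd => exact ⟨_, _, hd, Or.inr hz⟩
  | lopsided hv hw ht hm => exact ⟨_, _, by omega, Or.inr hv⟩
  | lopsidedAbove hvw hv hw hw' ht hm => exact ⟨_, _, by omega, Or.inr hv⟩
  | lopsidedInside hvy hv hyu hyd ht hm => exact ⟨_, _, by omega, Or.inr hv⟩
  | long hv hwu hwd ht hm => exact ⟨_, _, by omega, Or.inr hv⟩

/-- The adjusted lengths known for one term of the sequence. -/
structure Node where
  up : ℕ
  down : ℕ
  weakUp : ℕ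
  weakDown : ℕ

/-- The node of a new term, given the nodes of the earlier terms below and above it. -/
def Node.new (lo hi : List Node) : Node :=
  let u := lo.foldr (fun p r => max (p.weakUp + 1) r) 0
  let d := hi.foldr (fun p r => max (p.weakDown + 1) r) 0
  ⟨u, d, lo.foldr (fun p r => max (max 2 (p.down + 1)) r) u,
    hi.foldr (fun p r => max (max 2 (p.up + 1)) r) d⟩

/-- Exchange the roles of up and down. -/
def Node.flip (p : Node) : Node := ⟨p.down, p.up, p.weakDown, p.weakUp⟩

/-- A sufficient condition for `State` involving two arbitrary terms. -/
def coversPair (t : ℕ) (p q : Node) : Bool :=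
  (t ≤ p.down + q.up && q.up + 2 ≤ p.down) ||
  (t ≤ p.down + 2 && 5 ≤ p.down && 2 ≤ q.weakUp && 2 ≤ q.weakDown)

/-- A sufficient condition for `State` involving a term and a larger one. -/
def coversOrdered (t : ℕ) (p q : Node) : Bool :=
  (p.down + 1 ≤ q.weakUp && t ≤ q.down + p.down) ||
  (1 ≤ q.weakUp && t ≤ q.down + (q.weakUp - 1) && q.weakUp ≤ p.down + 1) ||
  (t ≤ p.down + q.up && q.up + 1 ≤ q.weakUp && q.up + 1 ≤ p.down)

/-- A sufficient condition for `State`, up to symmetry, involving a term and a larger one. -/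
def covers (t : ℕ) (p q : Node) : Bool :=
  coversOrdered t p q || coversPair t p q || coversPair t q p ||
  coversOrdered t q.flip p.flip || coversPair t q.flip p.flip || coversPair t p.flip q.flip

/-- This is `f n`, but the kernel evaluates `n` before it unfolds `f`. -/
def force (n : ℕ) (f : ℕ → Bool) : Bool := Nat.rec (f 0) (fun k _ => f k.succ) n

lemma force_eq (n : ℕ) (f : ℕ → Bool) : force n f = f n := by cases n <;> rfl

/-- This is `f p`, but the kernel evaluates `p` before it unfolds `f`. -/
def Node.force (p : Node) (f : Node → Bool) : Bool :=
  Rollercoaster.force p.up fun u => Rollercoaster.force p.down fun d =>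
    Rollercoaster.force p.weakUp fun a => Rollercoaster.force p.weakDown fun b => f ⟨u, d, a, b⟩

lemma Node.force_eq (p : Node) (f : Node → Bool) : p.force f = f p := by
  simp only [Node.force, Rollercoaster.force_eq]

/-- Whether every continuation of a sequence of length `t` with nodes `l`, in increasing order of
the terms, reaches `State` after at most `k` more terms. -/
def search : ℕ → ℕ → List Node → Bool
  | 0, _, _ => false
  | k + 1, t, l => (List.range (l.length + 1)).all fun i =>
      (Node.new (l.take i) (l.drop i)).force fun q =>
        (l.take i).any (fun p => covers (t + 1) p q) ||
        (l.drop i).any (fun p => covers (t + 1) q p) ||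
        search k (t + 1) (l.take i ++ q :: l.drop i)

lemma search_eight : search 8 0 [] = true := by decide +kernel

/-- The lengths listed in `p` are attained at the term `x`. -/
structure Node.Holds (s : ℕ → ℝ) (t : ℕ) (x : ℝ) (p : Node) : Prop where
  up : Up s t x p.up
  down : Down s t x p.down
  weakUp : WeakUp s t x p.weakUp
  weakDown : WeakDown s t x p.weakDown

lemma Node.Holds.succ {s : ℕ → ℝ} {t : ℕ} {x : ℝ} {p : Node} (h : p.Holds s t x) :
    p.Holds s (t + 1) x :=
  ⟨h.up.succ, h.down.succ, h.weakUp.succ, h.weakDown.succ⟩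

lemma Node.Holds.flip {s : ℕ → ℝ} {t : ℕ} {x : ℝ} {p : Node} (h : p.Holds s t x) :
    p.flip.Holds (-s) t (-x) :=
  ⟨up_neg.2 h.down, down_neg.2 h.up, weakUp_neg.2 h.weakDown, weakDown_neg.2 h.weakUp⟩

lemma foldr_max {α : Type*} {P : ℕ → Prop} (f : α → ℕ) (l : List α) {c : ℕ} (hc : P c)
    (hf : ∀ p ∈ l, P (f p)) : P (l.foldr (fun p r => max (f p) r) c) := by
  induction l with
  | nil => exact hc
  | cons p l ih =>
    have ih := ih fun q hq => hf q (List.mem_cons_of_mem _ hq)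
    rw [List.foldr_cons]
    rcases max_choice (f p) (l.foldr (fun p r => max (f p) r) c) with e | e <;> rw [e]
    · exact hf p List.mem_cons_self
    · exact ih

lemma Node.new_holds {s : ℕ → ℝ} {t : ℕ} {lo hi : List Node}
    (hlo : ∀ p ∈ lo, ∃ x < s t, p.Holds s t x) (hhi : ∀ p ∈ hi, ∃ x, s t < x ∧ p.Holds s t x) :
    (Node.new lo hi).Holds s (t + 1) (s t) := by
  have hu : Up s (t + 1) (s t) (Node.new lo hi).up := by
    refine foldr_max (P := Up s (t + 1) (s t)) _ lo Up.zero fun p hp => ?_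
    obtain ⟨x, hx, h⟩ := hlo p hp
    exact h.weakUp.up hx
  have hd : Down s (t + 1) (s t) (Node.new lo hi).down := by
    refine foldr_max (P := Down s (t + 1) (s t)) _ hi Up.zero fun p hp => ?_
    obtain ⟨x, hx, h⟩ := hhi p hp
    exact h.weakDown.down hx
  refine ⟨hu, hd, ?_, ?_⟩
  · refine foldr_max (P := WeakUp s (t + 1) (s t)) _ lo hu.weak fun p hp => ?_
    obtain ⟨x, hx, h⟩ := hlo p hp
    rcases max_choice 2 (p.down + 1) with e | e <;> rw [e]
    · obtain ⟨i, hi, rfl⟩ := h.up.exists_eq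
      exact weakUp_two hi hx
    · exact h.down.weakUp hx
  · refine foldr_max (P := WeakDown s (t + 1) (s t)) _ hi hd.weak fun p hp => ?_
    obtain ⟨x, hx, h⟩ := hhi p hp
    rcases max_choice 2 (p.up + 1) with e | e <;> rw [e]
    · obtain ⟨i, hi, rfl⟩ := h.up.exists_eq
      exact weakUp_two (s := -s) hi (neg_lt_neg hx)
    · exact h.up.weakDown hx

lemma state_of_coversPair {s : ℕ → ℝ} {t : ℕ} {x y : ℝ} {p q : Node} (hp : p.Holds s t x)
    (hq : q.Holds s t y) (h : coversPair t p q = true) : State s t := by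
  simp only [coversPair, Bool.or_eq_true, Bool.and_eq_true, decide_eq_true_eq] at h
  rcases h with ⟨h1, h2⟩ | ⟨⟨⟨h1, h2⟩, h3⟩, h4⟩
  · exact .lopsided hp.down hq.up h1 h2
  · exact .long hp.down (hq.weakUp.mono h3) (hq.weakDown.mono h4) h1 h2

lemma state_of_coversOrdered {s : ℕ → ℝ} {t : ℕ} {x y : ℝ} {p q : Node} (hxy : x < y)
    (hp : p.Holds s t x) (hq : q.Holds s t y) (h : coversOrdered t p q = true) : State s t := by
  simp only [coversOrdered, Bool.or_eq_true, Bool.and_eq_true, decide_eq_true_eq] at h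
  rcases h with (⟨h1, h2⟩ | ⟨⟨h1, h2⟩, h3⟩) | ⟨⟨h1, h2⟩, h3⟩
  · exact .descending hxy hp.down hq.down (hq.weakUp.mono h1) h2
  · exact .descending hxy (hp.down.mono (k := q.weakUp - 1) (by omega)) hq.down
      (hq.weakUp.mono (by omega)) h2
  · exact .lopsidedAbove hxy hp.down hq.up (hq.weakUp.mono h2) h1 h3

lemma state_of_covers {s : ℕ → ℝ} {t : ℕ} {x y : ℝ} {p q : Node} (hxy : x < y)
    (hp : p.Holds s t x) (hq : q.Holds s t y) (h : covers t p q = true) :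
    State s t ∨ State (-s) t := by
  simp only [covers, Bool.or_eq_true] at h
  rcases h with ((((h | h) | h) | h) | h) | h
  · exact Or.inl (state_of_coversOrdered hxy hp hq h)
  · exact Or.inl (state_of_coversPair hp hq h)
  · exact Or.inl (state_of_coversPair hq hp h)
  · exact Or.inr (state_of_coversOrdered (neg_lt_neg hxy) hq.flip hp.flip h)
  · exact Or.inr (state_of_coversPair hq.flip hp.flip h)
  · exact Or.inr (state_of_coversPair hp.flip hq.flip h)

/-- The list `l` consists of terms in increasing order, with lengths attained at them. -/
def Realizes (s : ℕ → ℝ) (t : ℕ) (l : List (ℝ × Node)) : Prop :=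
  l.Pairwise (fun a b => a.1 < b.1) ∧ ∀ a ∈ l, a.2.Holds s t a.1

lemma exists_split {α : Type*} (l : List (ℝ × α)) (hl : l.Pairwise (fun a b => a.1 < b.1)) (x : ℝ)
    (hx : ∀ a ∈ l, a.1 ≠ x) :
    ∃ l₁ l₂, l = l₁ ++ l₂ ∧ (∀ a ∈ l₁, a.1 < x) ∧ ∀ a ∈ l₂, x < a.1 := by
  induction l with
  | nil => exact ⟨[], [], rfl, by simp, by simp⟩
  | cons a l ih =>
    rw [List.pairwise_cons] at hl
    rcases (hx a List.mem_cons_self).lt_or_gt with h | h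
    · obtain ⟨l₁, l₂, rfl, h₁, h₂⟩ := ih hl.2 fun b hb => hx b (List.mem_cons_of_mem _ hb)
      exact ⟨a :: l₁, l₂, rfl, by simpa [h] using h₁, h₂⟩
    · refine ⟨[], a :: l, rfl, by simp, ?_⟩
      intro b hb
      rcases List.mem_cons.1 hb with rfl | hb
      · exact h
      · exact h.trans (hl.1 b hb)

lemma Realizes.exists_insert {s : ℕ → ℝ} {t : ℕ} {l : List (ℝ × Node)} (h : Realizes s t l)
    (hs : ∀ i < t, s i ≠ s t) :
    ∃ l₁ l₂, l = l₁ ++ l₂ ∧ Realizes s (t + 1)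
      (l₁ ++ (s t, Node.new (l₁.map Prod.snd) (l₂.map Prod.snd)) :: l₂) := by
  obtain ⟨l₁, l₂, rfl, h₁, h₂⟩ := exists_split l h.1 (s t) fun a ha => (h.2 a ha).up.ne hs
  refine ⟨l₁, l₂, rfl, ?_, ?_⟩
  · have hp := List.pairwise_append.1 h.1
    refine List.pairwise_append.2 ⟨hp.1, List.pairwise_cons.2 ⟨h₂, hp.2.1⟩, ?_⟩
    intro a ha b hb
    rcases List.mem_cons.1 hb with rfl | hb
    · exact h₁ a ha
    · exact hp.2.2 a ha b hb
  · intro a ha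
    rcases List.mem_append.1 ha with ha | ha
    · exact (h.2 a (List.mem_append_left _ ha)).succ
    rcases List.mem_cons.1 ha with rfl | ha
    · refine Node.new_holds ?_ ?_ <;> intro p hp <;> obtain ⟨b, hb, rfl⟩ := List.mem_map.1 hp
      · exact ⟨b.1, h₁ b hb, h.2 b (List.mem_append_left _ hb)⟩
      · exact ⟨b.1, h₂ b hb, h.2 b (List.mem_append_right _ hb)⟩
    · exact (h.2 a (List.mem_append_right _ ha)).succ

lemma Realizes.exists_state {s : ℕ → ℝ} (k : ℕ) {t : ℕ} {l : List (ℝ × Node)}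
    (h : Realizes s t l) (hs : ∀ j < t + k, ∀ i < j, s i ≠ s j)
    (hc : search k t (l.map Prod.snd) = true) : ∃ t' ≤ t + k, State s t' ∨ State (-s) t' := by
  induction k generalizing t l with
  | zero => simp [search] at hc
  | succ k ih =>
    obtain ⟨l₁, l₂, rfl, h'⟩ := h.exists_insert (hs t (by omega))
    have hc := List.all_eq_true.1 hc l₁.length (by simp)
    simp only [Node.force_eq, List.map_append, List.take_left' (List.length_map _),
      List.drop_left' (List.length_map _), Bool.or_eq_true, List.any_eq_true, List.mem_map] at hc
    obtain ⟨hsort, hhold⟩ := h'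
    have hsort' := List.pairwise_append.1 hsort
    have hnew := hhold _ (List.mem_append_right _ List.mem_cons_self)
    rcases hc with (⟨_, ⟨a, ha, rfl⟩, hc⟩ | ⟨_, ⟨a, ha, rfl⟩, hc⟩) | hc
    · exact ⟨t + 1, by omega, state_of_covers (hsort'.2.2 a ha _ List.mem_cons_self)
        (hhold a (List.mem_append_left _ ha)) hnew hc⟩
    · exact ⟨t + 1, by omega, state_of_covers ((List.pairwise_cons.1 hsort'.2.1).1 a ha) hnew
        (hhold a (List.mem_append_right _ (List.mem_cons_of_mem _ ha))) hc⟩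
    · obtain ⟨t', ht', hst⟩ := ih ⟨hsort, hhold⟩ (fun j hj => hs j (by omega)) (by simpa using hc)
      exact ⟨t', by omega, hst⟩

lemma state_or_state_neg {s : ℕ → ℝ} {n : ℕ} (hn : 8 ≤ n) (hs : ∀ j < n, ∀ i < j, s i ≠ s j) :
    State s n ∨ State (-s) n := by
  obtain ⟨t, ht, hst⟩ := Realizes.exists_state (s := s) (t := 0) (l := []) 8 ⟨.nil, by simp⟩
    (fun j hj => hs j (by omega)) search_eight
  have htn : t ≤ n := by omega
  clear ht hn
  induction n, htn using Nat.le_induction with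
  | base => exact hst
  | succ n _ ih =>
    have hne := hs n (by omega)
    rcases ih fun j hj => hs j (by omega) with h | h
    · exact h.succ hne
    · rcases h.succ fun i hi e => hne i hi (neg_injective e) with h | h
      · exact Or.inr h
      · exact Or.inl (by simpa using h)

lemma exists_climb {s : ℕ → ℝ} {n : ℕ} (hn : 8 ≤ n) (hs : ∀ j < n, ∀ i < j, s i ≠ s j) :
    ∃ i m, i < n ∧ n ≤ 2 * m ∧ (Climb s True i m ∨ Climb (-s) True i m) := by
  have key : ∀ {s : ℕ → ℝ} {x : ℝ} {l : ℕ}, n ≤ 2 * l → Up s n x l →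
      ∃ i m, i < n ∧ n ≤ 2 * m ∧ Climb s True i m := by
    rintro s x l hl ⟨i, hi, -, ⟨m, hm, h⟩ | h | h⟩
    · exact ⟨i, m, hi, by omega, h⟩
    · omega
    · omega
  rcases state_or_state_neg hn hs with h | h <;> obtain ⟨x, l, hl, h | h⟩ := h.exists_long <;>
    obtain ⟨i, m, hi, hm, hc⟩ := key hl h
  · exact ⟨i, m, hi, hm, Or.inl hc⟩
  · exact ⟨i, m, hi, hm, Or.inr hc⟩
  · exact ⟨i, m, hi, hm, Or.inr hc⟩
  · exact ⟨i, m, hi, hm, Or.inl (by simpa using hc)⟩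

lemma inLongRun_neg {s : ℕ → ℝ} {a : ℕ → ℕ} {m q : ℕ} :
    InLongRun (-s) a m q ↔ InLongRun s a m q := by
  have h : ∀ x y z : ℝ, (-x - -y) * (-y - -z) = (x - y) * (y - z) := fun x y z => by ring
  simp only [InLongRun, Pi.neg_apply, h]

lemma strictMonoOn_or_strictAntiOn_pair {m : ℕ} (T : ℕ → ℝ) {k l : Fin m}
    (hkl : (l : ℕ) = k + 1) (h : T k ≠ T (k + 1)) :
    StrictMonoOn (fun k : Fin m => T k) (Set.Icc k l) ∨
      StrictAntiOn (fun k : Fin m => T k) (Set.Icc k l) := by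
  have key : ∀ x ∈ Set.Icc k l, ∀ y ∈ Set.Icc k l, x < y → (x : ℕ) = k ∧ (y : ℕ) = k + 1 := by
    intro x hx y hy hxy
    simp only [Set.mem_Icc, Fin.le_def, Fin.lt_def] at hx hy hxy
    omega
  rcases h.lt_or_gt with h | h
  · left
    intro x hx y hy hxy
    obtain ⟨e, e'⟩ := key x hx y hy hxy
    simpa only [e, e'] using h
  · right
    intro x hx y hy hxy
    obtain ⟨e, e'⟩ := key x hx y hy hxy
    simpa only [e, e'] using h

lemma strictMonoOn_or_strictAntiOn_triple {m : ℕ} (T : ℕ → ℝ) {k l : Fin m}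
    (hkl : (l : ℕ) = k + 2) (h : 0 < (T (k + 1) - T k) * (T (k + 2) - T (k + 1))) :
    StrictMonoOn (fun k : Fin m => T k) (Set.Icc k l) ∨
      StrictAntiOn (fun k : Fin m => T k) (Set.Icc k l) := by
  have key : ∀ x ∈ Set.Icc k l, ∀ y ∈ Set.Icc k l, x < y → ((x : ℕ) = k ∧ (y : ℕ) = k + 1) ∨
      ((x : ℕ) = k ∧ (y : ℕ) = k + 2) ∨ ((x : ℕ) = k + 1 ∧ (y : ℕ) = k + 2) := by
    intro x hx y hy hxy
    simp only [Set.mem_Icc, Fin.le_def, Fin.lt_def] at hx hy hxy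
    omega
  rcases mul_pos_iff.1 h with ⟨h1, h2⟩ | ⟨h1, h2⟩
  · left
    intro x hx y hy hxy
    rcases key x hx y hy hxy with ⟨e, e'⟩ | ⟨e, e'⟩ | ⟨e, e'⟩ <;> simp only [e, e'] <;> linarith
  · right
    intro x hx y hy hxy
    rcases key x hx y hy hxy with ⟨e, e'⟩ | ⟨e, e'⟩ | ⟨e, e'⟩ <;> simp only [e, e'] <;> linarith

lemma isRollercoaster_of_steps {m : ℕ} (T : ℕ → ℝ) (hm : 2 ≤ m)
    (hT : ∀ k < m, ∀ l < k, T l ≠ T k)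
    (hstep : ∀ k, k + 1 < m →
      (k + 2 < m ∧ 0 < (T (k + 1) - T k) * (T (k + 2) - T (k + 1))) ∨
      (1 ≤ k ∧ 0 < (T k - T (k - 1)) * (T (k + 1) - T k))) :
    IsRollercoaster fun k : Fin m => T k := by
  refine ⟨by rcases hstep 0 (by omega) with h | h <;> omega, ?_, ?_⟩
  · intro k l h
    rcases lt_trichotomy (k : ℕ) l with hkl | hkl | hkl
    · exact (hT l l.2 k hkl h).elim
    · exact Fin.ext hkl
    · exact (hT k k.2 l hkl h.symm).elim
  · rintro i j ⟨hij, -, hmax⟩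
    by_contra hlt
    have hij' : (i : ℕ) ≤ j := hij
    rcases (by omega : (j : ℕ) = i ∨ (j : ℕ) = i + 1) with hj | hj
    · obtain rfl : j = i := Fin.ext hj
      by_cases hi : (j : ℕ) + 1 < m
      · refine hmax j ⟨j + 1, hi⟩ le_rfl (Fin.le_def.2 (by simp)) (Or.inr ?_)
          (strictMonoOn_or_strictAntiOn_pair T rfl (hT _ hi _ (by omega)))
        simp [Fin.ext_iff]
      · refine hmax ⟨j - 1, by omega⟩ j (Fin.le_def.2 (by simp)) le_rfl (Or.inl ?_)
          (strictMonoOn_or_strictAntiOn_pair T ?_ (hT _ ?_ _ ?_))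
        · simp only [ne_eq, Fin.ext_iff]
          omega
        all_goals simp only; omega
    · rcases hstep i (by omega) with ⟨h1, h2⟩ | ⟨h1, h2⟩
      · refine hmax i ⟨i + 2, h1⟩ le_rfl (Fin.le_def.2 (by simp; omega)) (Or.inr ?_)
          (strictMonoOn_or_strictAntiOn_triple T rfl h2)
        simp only [ne_eq, Fin.ext_iff]
        omega
      · refine hmax ⟨i - 1, by omega⟩ j (Fin.le_def.2 (by simp)) le_rfl (Or.inl ?_)
          (strictMonoOn_or_strictAntiOn_triple T (by simp only; omega) ?_)
        · simp only [ne_eq, Fin.ext_iff]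
          omega
        · simp only
          rwa [show (i : ℕ) - 1 + 2 = i + 1 by omega, show (i : ℕ) - 1 + 1 = i by omega]

end Rollercoaster

/-- Every sequence of `n ≥ 8` distinct real numbers contains a subsequence of
length at least `⌈n/2⌉` that is a rollercoaster. -/
theorem statement0 (n : ℕ) (hn : 8 ≤ n) (s : Fin n → ℝ) (hs : Function.Injective s) :
    ∃ (m : ℕ) (f : Fin m → Fin n), StrictMono f ∧
      IsRollercoaster (s ∘ f) ∧ (n + 1) / 2 ≤ m := by
  set S : ℕ → ℝ := fun i => if h : i < n then s ⟨i, h⟩ else 0 with hS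
  have hval : ∀ i : Fin n, S i = s i := fun i => by simp [hS]
  have hinj : ∀ j < n, ∀ i < j, S i ≠ S j := by
    intro j hj i hi h
    have := hs ((hval ⟨i, hi.trans hj⟩).symm.trans (h.trans (hval ⟨j, hj⟩)))
    simp only [Fin.mk.injEq] at this
    omega
  obtain ⟨i, m, hi, hnm, hc⟩ := Rollercoaster.exists_climb hn hinj
  obtain ⟨a, ha, hm, hlt, hrun⟩ : ∃ a : ℕ → ℕ, a 0 = i ∧ 2 ≤ m ∧
      (∀ q, q + 1 < m → a (q + 1) < a q) ∧
      ∀ q, q + 1 < m → Rollercoaster.InLongRun S a m q := by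
    rcases hc with ⟨a, ha, hm, hlt, -, hrun⟩ | ⟨a, ha, hm, hlt, -, hrun⟩
    · exact ⟨a, ha, hm, hlt, fun q hq => hrun q hq fun _ => trivial⟩
    · exact ⟨a, ha, hm, hlt, fun q hq =>
        Rollercoaster.inLongRun_neg.1 (hrun q hq fun _ => trivial)⟩
  have hanti : ∀ p q, p < q → q < m → a q < a p := by
    intro p q hpq hq
    induction q, hpq using Nat.le_induction with
    | base => exact hlt p hq
    | succ q _ ih => exact (hlt q hq).trans (ih (by omega))
  have hbound : ∀ q < m, a q < n := by
    intro q hq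
    rcases Nat.eq_zero_or_pos q with rfl | h
    · omega
    · have := hanti 0 q h hq
      omega
  refine ⟨m, fun k => ⟨a (m - 1 - k), hbound _ (by omega)⟩, ?_, ?_, by omega⟩
  · intro k l hkl
    have : (k : ℕ) < l := hkl
    exact hanti _ _ (by omega) (by omega)
  · have hcomp : s ∘ (fun k : Fin m => (⟨a (m - 1 - k), hbound _ (by omega)⟩ : Fin n)) =
        fun k : Fin m => S (a (m - 1 - k)) := funext fun k => (hval _).symm
    rw [hcomp]
    refine Rollercoaster.isRollercoaster_of_steps (fun k => S (a (m - 1 - k))) hm ?_ ?_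
    · intro k hk l hl h
      exact hinj _ (hbound _ (by omega)) _ (hanti _ _ (by omega) (by omega)) h
    · intro k hk
      obtain ⟨q, rfl⟩ : ∃ q, m = q + k + 2 := ⟨m - k - 2, by omega⟩
      rcases hrun q (by omega) with ⟨h1, h2⟩ | ⟨h1, h2⟩
      · right
        refine ⟨by omega, ?_⟩
        rw [show q + k + 2 - 1 - k = q + 1 by omega, show q + k + 2 - 1 - (k - 1) = q + 2 by omega,
          show q + k + 2 - 1 - (k + 1) = q by omega]
        linarith
      · left
        refine ⟨by omega, ?_⟩
        rw [show q + k + 2 - 1 - k = q + 1 by omega, show q + k + 2 - 1 - (k + 1) = q by omega,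
          show q + k + 2 - 1 - (k + 2) = q - 1 by omega]
        linarith
end

section
/- For every sequence of n ≥ 8 distinct real numbers there exist two subsequences, each of which is a rollercoaster, whose lengths sum to at least n. -/
/-- `Steps up a b` says that the step from `a` to `b` goes up if `up` holds, and down otherwise. -/
def Steps (up : Bool) (a b : ℝ) : Prop := if up then a < b else b < a

/-- `Roll t up full i L` describes the subsequences of `t` of length `L` ending at index `i` and
ending with a step in direction `up`, all of whose runs have length at least 3 except that, if
`full` is `false`, the last run has length 2. -/
inductive Roll (t : ℕ → ℝ) : Bool → Bool → ℕ → ℕ → Prop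
  | pair {up : Bool} {i j : ℕ} (hij : i < j) (h : Steps up (t i) (t j)) : Roll t up false j 2
  | step {up full : Bool} {i j L : ℕ} (hr : Roll t up full i L) (hij : i < j)
      (h : Steps up (t i) (t j)) : Roll t up true j (L + 1)
  | turn {up : Bool} {i j L : ℕ} (hr : Roll t (!up) true i L) (hij : i < j)
      (h : Steps up (t i) (t j)) : Roll t up false j (L + 1)

theorem Steps.neg {up : Bool} {a b : ℝ} (h : Steps up a b) : Steps (!up) (-a) (-b) := by
  cases up <;> simpa [Steps] using h

theorem Roll.neg {t : ℕ → ℝ} {up full : Bool} {i L : ℕ} (h : Roll t up full i L) :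
    Roll (-t) (!up) full i L := by
  induction h with
  | pair hij h => exact .pair hij h.neg
  | step _ hij h ih => exact .step ih hij h.neg
  | turn _ hij h ih => exact .turn ih hij h.neg

theorem roll_neg_iff {t : ℕ → ℝ} {up full : Bool} {i L : ℕ} :
    Roll (-t) up full i L ↔ Roll t (!up) full i L :=
  ⟨fun h => by simpa using h.neg, fun h => by simpa using h.neg⟩

/-! ### Realising a roll as a rollercoaster -/

/-- The data realising `Roll t up full i L` : a strictly increasing choice `g` of indices. -/
structure Realizes (t : ℕ → ℝ) (up full : Bool) (i L : ℕ) (g : ℕ → ℕ) : Prop where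
  two_le : 2 ≤ L
  three_le : full = true → 3 ≤ L
  last : g (L - 1) = i
  lt : ∀ k, k + 1 < L → g k < g (k + 1)
  last_step : Steps up (t (g (L - 2))) (t (g (L - 1)))
  adjacent : ∀ k, k + 1 < L → (full = false → k + 2 < L) → ∃ b,
    Steps b (t (g k)) (t (g (k + 1))) ∧
      ((k + 2 < L ∧ Steps b (t (g (k + 1))) (t (g (k + 2)))) ∨
        (1 ≤ k ∧ Steps b (t (g (k - 1))) (t (g k))))

theorem Roll.exists_realizes {t : ℕ → ℝ} {up full : Bool} {i L : ℕ} (h : Roll t up full i L) :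
    ∃ g, Realizes t up full i L g := by
  induction h with
  | @pair up i j hij h =>
    refine ⟨fun k => if k = 0 then i else j, ⟨le_rfl, by simp, by simp, ?_, by simpa using h, ?_⟩⟩
    · intro k hk
      obtain rfl : k = 0 := by omega
      simpa
    · intro k _ hk
      simp at hk
  | @step up full i j L hr hij h ih =>
    obtain ⟨g, hg⟩ := ih
    have h2 := hg.two_le
    have hl : Steps up (t (g (L - 1))) (t j) := by rwa [hg.last]
    have e : ∀ k, k < L → (if k < L then g k else j) = g k := fun k hk => if_pos hk
    have eL : (if L < L then g L else j) = j := if_neg (lt_irrefl _)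
    refine ⟨fun k => if k < L then g k else j, ⟨by omega, fun _ => by omega, ?_, ?_, ?_, ?_⟩⟩
    · simp
    · intro k hk
      rcases Nat.lt_or_ge (k + 1) L with h1 | h1
      · simpa only [e k (by omega), e _ h1] using hg.lt k h1
      · obtain rfl : k = L - 1 := by omega
        have : L - 1 + 1 = L := by omega
        simpa only [this, eL, e (L - 1) (by omega)] using hg.last.trans_lt hij
    · have h1 : L + 1 - 2 = L - 1 := by omega
      have h3 : L + 1 - 1 = L := by omega
      simpa only [h1, h3, eL, e (L - 1) (by omega)] using hl
    · intro k hk _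
      rcases Nat.lt_or_ge (k + 2) L with h1 | h1
      · obtain ⟨b, hb, h'⟩ := hg.adjacent k (by omega) (fun _ => h1)
        refine ⟨b, ?_, ?_⟩
        · simpa only [e k (by omega), e (k + 1) (by omega)] using hb
        · simp only [e k (by omega), e (k + 1) (by omega), e (k + 2) h1, e (k - 1) (by omega)]
          exact h'.imp (fun h => ⟨by omega, h.2⟩) id
      · obtain rfl | rfl : k = L - 2 ∨ k = L - 1 := by omega
        · have h3 : L - 2 + 1 = L - 1 := by omega
          have h4 : L - 2 + 2 = L := by omega
          refine ⟨up, ?_, Or.inl ⟨by omega, ?_⟩⟩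
          · simpa only [h3, e (L - 2) (by omega), e (L - 1) (by omega)] using hg.last_step
          · simpa only [h3, h4, eL, e (L - 1) (by omega)] using hl
        · have h3 : L - 1 + 1 = L := by omega
          have h4 : L - 1 - 1 = L - 2 := by omega
          refine ⟨up, ?_, Or.inr ⟨by omega, ?_⟩⟩
          · simpa only [h3, eL, e (L - 1) (by omega)] using hl
          · simpa only [h4, e (L - 2) (by omega), e (L - 1) (by omega)] using hg.last_step
  | @turn up i j L hr hij h ih =>
    obtain ⟨g, hg⟩ := ih
    have h2 := hg.two_le
    have hl : Steps up (t (g (L - 1))) (t j) := by rwa [hg.last]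
    have e : ∀ k, k < L → (if k < L then g k else j) = g k := fun k hk => if_pos hk
    have eL : (if L < L then g L else j) = j := if_neg (lt_irrefl _)
    refine ⟨fun k => if k < L then g k else j, ⟨by omega, by simp, ?_, ?_, ?_, ?_⟩⟩
    · simp
    · intro k hk
      rcases Nat.lt_or_ge (k + 1) L with h1 | h1
      · simpa only [e k (by omega), e _ h1] using hg.lt k h1
      · obtain rfl : k = L - 1 := by omega
        have : L - 1 + 1 = L := by omega
        simpa only [this, eL, e (L - 1) (by omega)] using hg.last.trans_lt hij
    · have h1 : L + 1 - 2 = L - 1 := by omega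
      have h3 : L + 1 - 1 = L := by omega
      simpa only [h1, h3, eL, e (L - 1) (by omega)] using hl
    · intro k _ hk
      have hk := hk rfl
      obtain ⟨b, hb, h'⟩ := hg.adjacent k (by omega) (by simp)
      refine ⟨b, ?_, ?_⟩
      · simpa only [e k (by omega), e (k + 1) (by omega)] using hb
      · rcases h' with ⟨h1, h'⟩ | ⟨h1, h'⟩
        · left
          simpa only [e (k + 1) (by omega), e (k + 2) h1] using ⟨by omega, h'⟩
        · right
          simpa only [e k (by omega), e (k - 1) (by omega)] using ⟨h1, h'⟩

/-- A finite sequence of distinct reals is a rollercoaster as soon as every step has an adjacent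
step in the same direction. -/
theorem isRollercoaster_of_adjacent {m : ℕ} (t : Fin m → ℝ) (ht : Function.Injective t)
    (hm : 3 ≤ m)
    (h : ∀ k (hk : k + 1 < m), ∃ b, Steps b (t ⟨k, by omega⟩) (t ⟨k + 1, hk⟩) ∧
      ((∃ h2 : k + 2 < m, Steps b (t ⟨k + 1, hk⟩) (t ⟨k + 2, h2⟩)) ∨
        (1 ≤ k ∧ Steps b (t ⟨k - 1, by omega⟩) (t ⟨k, by omega⟩)))) :
    IsRollercoaster t := by
  refine ⟨hm, ht, fun i j ⟨hij, _, hmax⟩ => ?_⟩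
  have two : ∀ k (hk : k + 1 < m),
      StrictMonoOn t (Set.Icc ⟨k, by omega⟩ ⟨k + 1, hk⟩) ∨
      StrictAntiOn t (Set.Icc ⟨k, by omega⟩ ⟨k + 1, hk⟩) := by
    intro k hk
    have hne : t ⟨k, by omega⟩ ≠ t ⟨k + 1, hk⟩ := fun h => by simpa using ht h
    have hv : ∀ x ∈ Set.Icc (⟨k, by omega⟩ : Fin m) ⟨k + 1, hk⟩,
        ∀ y ∈ Set.Icc (⟨k, by omega⟩ : Fin m) ⟨k + 1, hk⟩, x < y →
        x = ⟨k, by omega⟩ ∧ y = ⟨k + 1, hk⟩ := by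
      rintro ⟨x, hx⟩ ⟨h1, h2⟩ ⟨y, hy⟩ ⟨h3, h4⟩ hxy
      simp only [Fin.mk_le_mk, Fin.mk_lt_mk, Fin.mk.injEq] at *
      omega
    rcases hne.lt_or_gt with h | h
    · left
      intro x hx y hy hxy
      obtain ⟨rfl, rfl⟩ := hv x hx y hy hxy
      exact h
    · right
      intro x hx y hy hxy
      obtain ⟨rfl, rfl⟩ := hv x hx y hy hxy
      exact h
  have three : ∀ k (hk : k + 2 < m) b, Steps b (t ⟨k, by omega⟩) (t ⟨k + 1, by omega⟩) →
      Steps b (t ⟨k + 1, by omega⟩) (t ⟨k + 2, hk⟩) →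
      StrictMonoOn t (Set.Icc ⟨k, by omega⟩ ⟨k + 2, hk⟩) ∨
      StrictAntiOn t (Set.Icc ⟨k, by omega⟩ ⟨k + 2, hk⟩) := by
    intro k hk b h1 h2
    have hv : ∀ x ∈ Set.Icc (⟨k, by omega⟩ : Fin m) ⟨k + 2, hk⟩,
        ∀ y ∈ Set.Icc (⟨k, by omega⟩ : Fin m) ⟨k + 2, hk⟩, x < y →
        (x = ⟨k, by omega⟩ ∧ y = ⟨k + 1, by omega⟩) ∨ (x = ⟨k + 1, by omega⟩ ∧ y = ⟨k + 2, hk⟩) ∨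
        (x = ⟨k, by omega⟩ ∧ y = ⟨k + 2, hk⟩) := by
      rintro ⟨x, hx⟩ ⟨h1, h2⟩ ⟨y, hy⟩ ⟨h3, h4⟩ hxy
      simp only [Fin.mk_le_mk, Fin.mk_lt_mk, Fin.mk.injEq] at *
      omega
    cases b
    · right
      intro x hx y hy hxy
      simp only [Steps, Bool.false_eq_true, if_false] at h1 h2
      obtain ⟨rfl, rfl⟩ | ⟨rfl, rfl⟩ | ⟨rfl, rfl⟩ := hv x hx y hy hxy
      exacts [h1, h2, h2.trans h1]
    · left
      intro x hx y hy hxy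
      simp only [Steps, if_true] at h1 h2
      obtain ⟨rfl, rfl⟩ | ⟨rfl, rfl⟩ | ⟨rfl, rfl⟩ := hv x hx y hy hxy
      exacts [h1, h2, h1.trans h2]
  obtain ⟨i, hi⟩ := i
  obtain ⟨j, hj⟩ := j
  simp only [Fin.mk_le_mk] at hij
  by_contra! hlt
  simp only at hlt
  obtain rfl | rfl : j = i ∨ j = i + 1 := by omega
  · rcases Nat.lt_or_ge (j + 1) m with h1 | h1
    · exact hmax ⟨j, hj⟩ ⟨j + 1, h1⟩ le_rfl (by simp) (by simp) (two j h1)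
    · obtain ⟨k, rfl⟩ : ∃ k, j = k + 1 := ⟨j - 1, by omega⟩
      exact hmax ⟨k, by omega⟩ ⟨k + 1, hj⟩ (by simp) le_rfl (by simp) (two k hj)
  · obtain ⟨b, hb, ⟨h2, h'⟩ | ⟨h2, h'⟩⟩ := h i hj
    · exact hmax ⟨i, hi⟩ ⟨i + 2, h2⟩ le_rfl (by simp) (by simp) (three i h2 b hb h')
    · obtain ⟨k, rfl⟩ : ∃ k, i = k + 1 := ⟨i - 1, by omega⟩
      exact hmax ⟨k, by omega⟩ ⟨k + 2, hj⟩ (by simp) le_rfl (by simp) (three k hj b h' hb)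

theorem Roll.exists_isRollercoaster {t : ℕ → ℝ} (ht : Function.Injective t) {up : Bool}
    {i L n : ℕ} (h : Roll t up true i L) (hi : i < n) :
    ∃ f : Fin L → Fin n, StrictMono f ∧ IsRollercoaster fun k => t (f k) := by
  obtain ⟨g, hg⟩ := h.exists_realizes
  have h3 := hg.three_le rfl
  have hmono : ∀ k l, k < l → l < L → g k < g l := by
    intro k l hkl
    induction l, hkl using Nat.le_induction with
    | base => exact hg.lt k
    | succ l _ ih => exact fun hl => (ih (by omega)).trans (hg.lt l hl)
  have hle : ∀ k, k < L → g k < n := by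
    intro k hk
    have hlast := hg.last
    rcases Nat.lt_or_ge k (L - 1) with h1 | h1
    · have := hmono k (L - 1) h1 (by omega)
      omega
    · obtain rfl : k = L - 1 := by omega
      omega
  let f : Fin L → Fin n := fun k => ⟨g k, hle k k.2⟩
  have hf : StrictMono f := fun k l hkl => hmono k l hkl l.2
  refine ⟨f, hf, isRollercoaster_of_adjacent _ ?_ h3 fun k hk => ?_⟩
  · exact ht.comp (Fin.val_injective.comp hf.injective)
  · obtain ⟨b, hb, h'⟩ := hg.adjacent k hk (by simp)
    exact ⟨b, hb, h'.imp (fun h => ⟨h.1, h.2⟩) id⟩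

/-! ### Configurations that persist when the sequence is prolonged -/

section Moves

variable {t : ℕ → ℝ} {full : Bool} {i j L : ℕ}

theorem Roll.pair_up (hij : i < j) (h : t i < t j) : Roll t true false j 2 := .pair hij h

theorem Roll.pair_down (hij : i < j) (h : t j < t i) : Roll t false false j 2 := .pair hij h

theorem Roll.up (hr : Roll t true full i L) (hij : i < j) (h : t i < t j) :
    Roll t true true j (L + 1) := .step hr hij h

theorem Roll.down (hr : Roll t false full i L) (hij : i < j) (h : t j < t i) :
    Roll t false true j (L + 1) := .step hr hij h

theorem Roll.turn_up (hr : Roll t false true i L) (hij : i < j) (h : t i < t j) :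
    Roll t true false j (L + 1) := .turn hr hij h

theorem Roll.turn_down (hr : Roll t true true i L) (hij : i < j) (h : t j < t i) :
    Roll t false false j (L + 1) := .turn hr hij h

end Moves

/-- `Lead t i L n` : a roll ending at `i` that complements one of length `L` to total length `n`
and can be prolonged by an upward step. -/
inductive Lead (t : ℕ → ℝ) (i L n : ℕ) : Prop
  | up {L₁ : ℕ} (h : Roll t true true i L₁) (hL : n ≤ L₁ + L)
  | half {L₁ : ℕ} (h : Roll t true false i L₁) (hL : n ≤ L₁ + L) (hn : n ≤ 2 * L)
  | down {L₁ : ℕ} (h : Roll t false true i L₁) (hL : n ≤ L₁ + L) (hn : n + 1 ≤ 2 * L)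
  | single (hL : n ≤ 1 + L) (hn : n + 1 ≤ 2 * L)

theorem Lead.succ {t : ℕ → ℝ} {i L n : ℕ} (h : Lead t i L n) : Lead t i (L + 1) (n + 1) := by
  cases h with
  | up h _ => exact .up h (by omega)
  | half h _ _ => exact .half h (by omega) (by omega)
  | down h _ _ => exact .down h (by omega) (by omega)
  | single _ _ => exact .single (by omega) (by omega)

/-- Configurations among the first `n` terms of `t` which provide two rollercoasters of total
length at least `n` and which, up to negating `t`, can be continued for ever. -/
inductive Config (t : ℕ → ℝ) : ℕ → Prop
  | split {n a d L₁ L₂ : ℕ} (ha : a < n) (hd : d < n) (hU : Roll t true true a L₁)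
      (hD : Roll t false true d L₂) (hL : n + 1 ≤ L₁ + L₂) : Config t n
  | gap {n a d L₁ L₂ : ℕ} (ha : a < n) (hd : d < n) (hU : Roll t true true a L₁)
      (hD : Roll t false true d L₂) (hL : n + 1 ≤ L₁ + L₂) (hdn : t d < t n) (hna : t n < t a) :
      Config t (n + 1)
  | nested {n i j L₁ L₂ : ℕ} (hji : j < i) (hi : i < n) (hij : t i < t j)
      (hI : Roll t true true i L₁) (hJ : Roll t true true j L₂) (hL : n ≤ L₁ + L₂) : Config t n
  | led {n i k w L L₂ : ℕ} (hk : k < n) (hi : i < n) (hw : w < n) (hik : t i < t k)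
      (hiw : t i ≤ t w) (hK : Roll t true true k L) (hW : Roll t false false w L₂)
      (hL : n + 1 ≤ L₂ + L) (lead : Lead t i L n) : Config t n
  | reach {n k r L L₁ : ℕ} (hk : k < n) (hr : r < n) (hrk : t r ≤ t k)
      (hK : Roll t true true k L) (hR : Roll t true true r L₁) (hL : n ≤ L + L₁)
      (hn : n + 2 ≤ 2 * L) (lead : ∀ x, n ≤ x → t x < t r → Lead t x L (n + 1)) : Config t n

theorem Config.gap_up {t : ℕ → ℝ} (ht : Function.Injective t) {n a d L₁ L₂ : ℕ} (ha : a < n)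
    (hd : d < n) (hU : Roll t true true a L₁) (hD : Roll t false true d L₂)
    (hL : n + 1 ≤ L₁ + L₂) (hdn : t d < t n) (hna : t n < t a) (hx : t n < t (n + 1)) :
    Config t (n + 2) := by
  have hn := hD.turn_up hd hdn
  have hx' := hn.up n.lt_succ_self hx
  rcases lt_or_gt_of_ne (ht.ne (show n + 1 ≠ a by omega)) with h | h
  · exact .nested (show a < n + 1 by omega) (by omega) h hx' hU (by omega)
  · have hx'' := hU.up (by omega) h
    have hw := hU.turn_down ha hna
    rcases le_total (L₁ + 1) (L₂ + 1 + 1) with h1 | h1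
    · exact .led (by omega) (show n < n + 2 by omega) (by omega) hx le_rfl hx' hw (by omega)
        (.half hn (by omega) (by omega))
    · exact .led (by omega) (show n < n + 2 by omega) (by omega) hx le_rfl hx'' hw (by omega)
        (.half hn (by omega) (by omega))

theorem Config.succ {t : ℕ → ℝ} (ht : Function.Injective t) {n : ℕ} (h : Config t n) :
    Config t (n + 1) ∨ Config (-t) (n + 1) := by
  have cmp : ∀ i < n, t n < t i ∨ t i < t n := fun i hi => lt_or_gt_of_ne (ht.ne hi.ne')
  cases h with
  | @split _ a d L₁ L₂ ha hd hU hD hL =>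
    left
    rcases cmp a ha with h | h
    · rcases cmp d hd with h' | h'
      · exact .split (by omega) n.lt_succ_self hU (hD.down hd h') (by omega)
      · exact .gap ha hd hU hD hL h' h
    · exact .split n.lt_succ_self (by omega) (hU.up ha h) hD (by omega)
  | @gap n a d L₁ L₂ ha hd hU hD hL hdn hna =>
    rcases cmp n n.lt_succ_self with h | h
    · right
      refine Config.gap_up (t := -t) (neg_injective.comp ht) hd ha (roll_neg_iff.2 hD)
        (roll_neg_iff.2 hU) (by omega) ?_ ?_ ?_ <;> simpa
    · exact .inl (.gap_up ht ha hd hU hD hL hdn hna h)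
  | @nested _ i j L₁ L₂ hji hi hij hI hJ hL =>
    left
    have hw := hJ.turn_down hji hij
    rcases cmp j (by omega) with h | h
    · rcases cmp i hi with h' | h'
      · exact .split (by omega) n.lt_succ_self hI (hw.down hi h') (by omega)
      · exact .nested (show j < n by omega) n.lt_succ_self h (hI.up hi h') hJ (by omega)
    · rcases le_total L₁ L₂ with h1 | h1
      · exact .led n.lt_succ_self (by omega) (by omega) (hij.trans h) le_rfl
          (hJ.up (by omega) h) hw (by omega) (.up hI (by omega))
      · exact .led n.lt_succ_self (by omega) (by omega) (hij.trans h) le_rfl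
          (hI.up hi (hij.trans h)) hw (by omega) (.up hI (by omega))
  | @led _ i k w L L₂ hk hi hw hik hiw hK hW hL lead =>
    left
    rcases cmp k hk with h | h
    · rcases cmp i hi with h' | h'
      · exact .split (by omega) n.lt_succ_self hK (hW.down hw (h'.trans_le hiw)) (by omega)
      · have hx := hK.turn_down hk h
        cases lead with
        | up hI _ => exact .nested hk n.lt_succ_self h (hI.up hi h') hK (by omega)
        | half hI _ _ => exact .nested hk n.lt_succ_self h (hI.up hi h') hK (by omega)
        | down hI _ _ =>
          exact .led (by omega) n.lt_succ_self n.lt_succ_self h le_rfl hK hx (by omega)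
            (.half (hI.turn_up hi h') (by omega) (by omega))
        | single _ _ =>
          exact .led (by omega) n.lt_succ_self n.lt_succ_self h le_rfl hK hx (by omega)
            (.half (Roll.pair_up hi h') (by omega) (by omega))
    · exact .led n.lt_succ_self (by omega) (by omega) (hik.trans h) hiw (hK.up hk h) hW
        (by omega) lead.succ
  | @reach _ k r L L₁ hk hr hrk hK hR hL hn lead =>
    left
    rcases cmp k hk with h | h
    · have hx := hK.turn_down hk h
      refine .led (by omega) n.lt_succ_self n.lt_succ_self h le_rfl hK hx (by omega) ?_
      rcases cmp r hr with h' | h'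
      · exact lead n le_rfl h'
      · exact .up (hR.up hr h') (by omega)
    · exact .reach n.lt_succ_self (by omega) (hrk.trans h.le) (hK.up hk h) hR (by omega)
        (by omega) fun x hx hxr => (lead x (by omega) hxr).succ

/-- Two rollercoasters among the first `n` terms of `t`, of total length at least `n`. -/
def HasPair (t : ℕ → ℝ) (n : ℕ) : Prop :=
  ∃ up₁ up₂ i j L₁ L₂, i < n ∧ j < n ∧ Roll t up₁ true i L₁ ∧ Roll t up₂ true j L₂ ∧ n ≤ L₁ + L₂

theorem Config.hasPair {t : ℕ → ℝ} {n : ℕ} (h : Config t n) : HasPair t n := by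
  cases h with
  | split ha hd hU hD hL => exact ⟨_, _, _, _, _, _, ha, hd, hU, hD, by omega⟩
  | gap ha hd hU hD hL hdn hna =>
    exact ⟨_, _, _, _, _, _, Nat.lt_succ_of_lt ha, Nat.lt_succ_of_lt hd, hU, hD, hL⟩
  | nested hji hi hij hI hJ hL => exact ⟨_, _, _, _, _, _, hi, hji.trans hi, hI, hJ, hL⟩
  | led hk hi hw hik hiw hK hW hL lead =>
    cases lead with
    | up hI hL => exact ⟨_, _, _, _, _, _, hi, hk, hI, hK, hL⟩
    | half _ _ hn => exact ⟨_, _, _, _, _, _, hk, hk, hK, hK, by omega⟩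
    | down hI hL _ => exact ⟨_, _, _, _, _, _, hi, hk, hI, hK, hL⟩
    | single _ hn => exact ⟨_, _, _, _, _, _, hk, hk, hK, hK, by omega⟩
  | reach hk hr hrk hK hR hL hn lead => exact ⟨_, _, _, _, _, _, hk, hk, hK, hK, by omega⟩

theorem HasPair.neg {t : ℕ → ℝ} {n : ℕ} (h : HasPair (-t) n) : HasPair t n := by
  obtain ⟨_, _, i, j, L₁, L₂, hi, hj, h₁, h₂, hL⟩ := h
  exact ⟨_, _, i, j, L₁, L₂, hi, hj, roll_neg_iff.1 h₁, roll_neg_iff.1 h₂, hL⟩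

/-- A configuration of `t` or of `-t` occurs among the first `n` terms. -/
def Good (t : ℕ → ℝ) (n : ℕ) : Prop := Config t n ∨ Config (-t) n

theorem good_neg {t : ℕ → ℝ} {n : ℕ} : Good (-t) n ↔ Good t n := by
  rw [Good, Good, neg_neg, or_comm]

theorem Good.succ {t : ℕ → ℝ} (ht : Function.Injective t) {n : ℕ} (h : Good t n) :
    Good t (n + 1) :=
  h.elim (Config.succ ht) fun h => good_neg.1 (Config.succ (neg_injective.comp ht) h)

theorem Good.mono {t : ℕ → ℝ} (ht : Function.Injective t) {m n : ℕ} (h : Good t m)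
    (hmn : m ≤ n) : Good t n :=
  Nat.le_induction h (fun _ _ => Good.succ ht) n hmn

theorem Good.hasPair {t : ℕ → ℝ} {n : ℕ} (h : Good t n) : HasPair t n :=
  h.elim Config.hasPair fun h => h.hasPair.neg

/-! ### A configuration occurs within the first eight terms -/

theorem good_of_turns {t : ℕ → ℝ} (ht : Function.Injective t) (hU : Roll t true false 3 2)
    (hD : Roll t false false 3 2) (h45 : t 4 < t 5) : Good t 8 := by
  have cmp : ∀ i j, i ≠ j → t i < t j ∨ t j < t i := fun i j hij => lt_or_gt_of_ne (ht.ne hij)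
  have toNeg : ∀ {b f i L}, Roll t (!b) f i L → Roll (-t) b f i L := roll_neg_iff.2
  rcases cmp 3 5 (by decide) with h35 | h53
  · rcases cmp 3 4 (by decide) with h34 | h43
    · have hU4 := hU.up (show 3 < 4 by decide) h34
      have hU5 := hU4.up (show 4 < 5 by decide) h45
      refine Good.mono ht (m := 6) (.inl (.reach (show 5 < 6 by decide) (show 4 < 6 by decide)
        h45.le hU5 hU4 (by decide) le_rfl fun x hx hxr => ?_)) (by decide)
      rcases cmp 3 x (by omega) with h | h
      · exact .up (hU.up (by omega) h) le_rfl
      · exact .down (hD.down (by omega) h) le_rfl le_rfl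
    · have hD4 := hD.down (show 3 < 4 by decide) h43
      have hHU5 := hD4.turn_up (show 4 < 5 by decide) h45
      have hU5 := hU.up (show 3 < 5 by decide) h35
      rcases cmp 5 6 (by decide) with h56 | h65
      · exact Good.mono ht (m := 7) (.inl (.split (show 6 < 7 by decide) (show 4 < 7 by decide)
          (hHU5.up (by decide) h56) hD4 le_rfl)) (by decide)
      · have hHD6 := hU5.turn_down (show 5 < 6 by decide) h65
        rcases cmp 4 6 (by decide) with h46 | h64
        · have hHU6 := hD4.turn_up (show 4 < 6 by decide) h46
          rcases cmp 6 7 (by decide) with h67 | h76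
          · exact .inl (.led (show 7 < 8 by decide) (show 4 < 8 by decide) (show 6 < 8 by decide)
              (h46.trans h67) h46.le (hHU6.up (by decide) h67) hHD6 (by decide)
              (.down hD4 (by decide) (by decide)))
          · exact .inr (.led (show 7 < 8 by decide) (show 5 < 8 by decide) (show 5 < 8 by decide)
              (neg_lt_neg (h76.trans h65)) le_rfl (toNeg (hHD6.down (by decide) h76))
              (toNeg hHU5) (by decide) (.down (toNeg hU5) (by decide) (by decide)))
        · exact Good.mono ht (m := 7) (.inr (.led (show 6 < 7 by decide) (show 5 < 7 by decide)
            (show 5 < 7 by decide) (neg_lt_neg h65) le_rfl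
            (toNeg (hD4.down (by decide) h64)) (toNeg hHU5) (by decide)
            (.down (toNeg hU5) (by decide) (by decide)))) (by decide)
  · have hD5 := hD.down (show 3 < 5 by decide) h53
    have hD4 := hD.down (show 3 < 4 by decide) (h45.trans h53)
    exact Good.mono ht (m := 6) (.inr (.nested (show 4 < 5 by decide) (by decide)
      (neg_lt_neg h45) (toNeg hD5) (toNeg hD4) le_rfl)) (by decide)

theorem good_of_lt {t : ℕ → ℝ} (ht : Function.Injective t) (h01 : t 0 < t 1) : Good t 8 := by
  have cmp : ∀ i j, i ≠ j → t i < t j ∨ t j < t i := fun i j hij => lt_or_gt_of_ne (ht.ne hij)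
  have toNeg : ∀ {b f i L}, Roll t (!b) f i L → Roll (-t) b f i L := roll_neg_iff.2
  have hU1 := Roll.pair_up (t := t) (show 0 < 1 by decide) h01
  rcases cmp 1 2 (by decide) with h12 | h21
  · have hU2 := hU1.up (show 1 < 2 by decide) h12
    exact Good.mono ht (m := 3) (.inl (.reach (show 2 < 3 by decide) (by decide) le_rfl hU2 hU2
      (by decide) (by decide) fun x _ _ => .single (by decide) (by decide))) (by decide)
  have hD2 := Roll.pair_down (t := t) (show 1 < 2 by decide) h21
  rcases cmp 0 2 (by decide) with h02 | h20
  · have hU2 := Roll.pair_up (t := t) (show 0 < 2 by decide) h02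
    refine Good.mono ht (m := 4) ?_ (by decide)
    rcases cmp 2 3 (by decide) with h23 | h32
    · exact .inl (.led (show 3 < 4 by decide) (show 2 < 4 by decide) (show 2 < 4 by decide) h23
        le_rfl (hU2.up (by decide) h23) hD2 (by decide) (.half hU2 (by decide) (by decide)))
    · exact .inr (.led (show 3 < 4 by decide) (show 2 < 4 by decide) (show 2 < 4 by decide)
        (neg_lt_neg h32) le_rfl (toNeg (hD2.down (by decide) h32)) (toNeg hU2) (by decide)
        (.half (toNeg hD2) (by decide) (by decide)))
  rcases cmp 2 3 (by decide) with h23 | h32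
  · rcases cmp 1 3 (by decide) with h13 | h31
    · exact Good.mono ht (m := 4) (.inl (.led (show 3 < 4 by decide) (show 2 < 4 by decide)
        (show 2 < 4 by decide) h23 le_rfl (hU1.up (by decide) h13) hD2 (by decide)
        (.single (by decide) (by decide)))) (by decide)
    · have hU3 := Roll.pair_up (t := t) (show 2 < 3 by decide) h23
      have hD3 := Roll.pair_down (t := t) (show 1 < 3 by decide) h31
      rcases cmp 4 5 (by decide) with h | h
      · exact good_of_turns ht hU3 hD3 h
      · exact good_neg.1 (good_of_turns (neg_injective.comp ht) (toNeg hD3) (toNeg hU3)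
          (neg_lt_neg h))
  · exact Good.mono ht (m := 4) (.inr (.led (show 3 < 4 by decide) (show 1 < 4 by decide)
      (show 1 < 4 by decide) (neg_lt_neg (h32.trans h21)) le_rfl
      (toNeg (hD2.down (by decide) h32)) (toNeg hU1) (by decide)
      (.single (by decide) (by decide)))) (by decide)

theorem good_eight {t : ℕ → ℝ} (ht : Function.Injective t) : Good t 8 := by
  rcases lt_or_gt_of_ne (ht.ne zero_ne_one) with h | h
  · exact good_of_lt ht h
  · exact good_neg.1 (good_of_lt (neg_injective.comp ht) (neg_lt_neg h))

theorem exists_injective_extension {n : ℕ} (s : Fin n → ℝ) (hs : Function.Injective s) :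
    ∃ t : ℕ → ℝ, Function.Injective t ∧ ∀ k : Fin n, t k = s k := by
  obtain ⟨B, hB⟩ := (Set.finite_range s).bddAbove
  have hB : ∀ k, s k ≤ B := fun k => hB ⟨k, rfl⟩
  refine ⟨fun k => if h : k < n then s ⟨k, h⟩ else B + 1 + k, fun i j hij => ?_, by simp⟩
  have h0 : ∀ k : ℕ, (0 : ℝ) ≤ k := fun k => k.cast_nonneg
  by_cases hi : i < n <;> by_cases hj : j < n <;> simp only [hi, hj, dif_pos, dif_neg,
    not_false_eq_true] at hij
  · simpa using hs hij
  · linarith [hB ⟨i, hi⟩, h0 j]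
  · linarith [hB ⟨j, hj⟩, h0 i]
  · simpa using hij

/-- Every sequence of `n ≥ 8` distinct real numbers contains two rollercoaster
subsequences whose lengths sum to at least `n`. -/
theorem statement2 (n : ℕ) (hn : 8 ≤ n) (s : Fin n → ℝ) (hs : Function.Injective s) :
    ∃ (m₁ m₂ : ℕ) (f₁ : Fin m₁ → Fin n) (f₂ : Fin m₂ → Fin n),
      StrictMono f₁ ∧ StrictMono f₂ ∧
      IsRollercoaster (s ∘ f₁) ∧ IsRollercoaster (s ∘ f₂) ∧ n ≤ m₁ + m₂ := by
  obtain ⟨t, ht, hts⟩ := exists_injective_extension s hs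
  obtain ⟨_, _, i, j, L₁, L₂, hi, hj, h₁, h₂, hL⟩ := ((good_eight ht).mono ht hn).hasPair
  obtain ⟨f₁, hf₁, hr₁⟩ := h₁.exists_isRollercoaster ht hi
  obtain ⟨f₂, hf₂, hr₂⟩ := h₂.exists_isRollercoaster ht hj
  simp only [hts] at hr₁ hr₂
  exact ⟨L₁, L₂, f₁, f₂, hf₁, hf₂, hr₁, hr₂, hL⟩
end

section
/- For every n ≥ 4, every sequence of at least 3n − 3 distinct real numbers contains a subsequence R′ of length at least n such that every run of R′, except possibly the first run and the last run, has odd length (and length at least 3). (This is the combinatorial core of the theorem that any path of n vertices has an x-monotone straight-through drawing on any set of at least 3n − 3 points in general orthogonal position.) -/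
/-- Counting lemma: a linear order on `N` points, with pairs coloured by `r`, cannot carry
longest-path lengths `t` and `u b` that are all at most `L` unless `N ≤ 3 * L + 1`. -/
theorem card_le_of_bounded_labels {N L : ℕ} (r : Fin N → Fin N → Bool)
    (t : Fin N → ℕ) (u : Bool → Fin N → ℕ)
    (htL : ∀ q, t q ≤ L) (huL : ∀ b q, u b q ≤ L)
    (hu : ∀ p q, p < q → t p < u (r p q) q)
    (ht : ∀ p q, p < q → u (r p q) p < t q)
    (hu_le : ∀ b q, u b q = 0 ∨ ∃ p < q, u b q ≤ t p + 1) :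
    N ≤ 3 * L + 1 := by
  have key : ∀ q, ∃ c : Option Bool, (c = none → ∀ p < q, t p < t q) ∧
      ∀ b, c = some b → (∀ p < q, t p < u b q) ∧ ∃ p < q, t q ≤ t p := by
    intro q
    by_cases h : ∀ p < q, t p < t q
    · exact ⟨none, fun _ => h, by simp⟩
    · push Not at h
      obtain ⟨p₀, hp₀, hle⟩ := h
      obtain ⟨p, hp, hmax⟩ := Finset.exists_max_image (Finset.univ.filter (· < q)) t
        ⟨p₀, by simpa using hp₀⟩
      simp only [Finset.mem_filter, Finset.mem_univ, true_and] at hp hmax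
      refine ⟨some (r p q), by simp, ?_⟩
      rintro b hb
      obtain rfl : r p q = b := by simpa using hb
      exact ⟨fun x hx => (hmax x hx).trans_lt (hu p q hp), p₀, hp₀, hle⟩
  choose c hnone hsome using key
  let lab : Fin N → ℕ := fun q => (c q).elim (t q) fun b => max (t q) (u (!b) q)
  have lab_lt : ∀ p q, p < q → c p = c q → lab p < lab q := by
    intro p q hpq hc
    rcases hq : c q with _ | b
    · simpa [lab, hc, hq] using hnone q hq p hpq
    · obtain ⟨hlt, x, hx, hle⟩ := hsome p b (hc.trans hq)
      simp only [lab, hc, hq, Option.elim]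
      have h1 := hu p q hpq
      have h2 := ht p q hpq
      have h3 := hlt x hx
      by_cases hr : r p q = b
      · rw [hr] at h1 h2
        have h4 : u (!b) p ≤ u b p := by
          rcases hu_le (!b) p with h | ⟨y, hy, h⟩
          · omega
          · have := hlt y hy
            omega
        omega
      · have hr' : r p q = !b := by cases b <;> simpa using hr
        rw [hr'] at h1 h2
        omega
  let S : Finset (Option Bool × ℕ) :=
    ({none} ×ˢ Finset.range (L + 1)) ∪ ({some true, some false} ×ˢ Finset.Icc 1 L)
  have hS : S.card ≤ 3 * L + 1 := by
    refine (Finset.card_union_le _ _).trans ?_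
    simp only [Finset.card_product, Finset.card_singleton, Finset.card_range, Nat.card_Icc]
    have : ({some true, some false} : Finset (Option Bool)).card = 2 := by decide
    rw [this]
    omega
  have hmap : ∀ q ∈ (Finset.univ : Finset (Fin N)), (c q, lab q) ∈ S := by
    intro q _
    rcases hq : c q with _ | b
    · simpa [S, lab, hq] using Nat.lt_succ_of_le (htL q)
    · obtain ⟨-, x, hx, -⟩ := hsome q b hq
      have h1 := ht x q hx
      have h2 := htL q
      have h3 := huL (!b) q
      have : 1 ≤ max (t q) (u (!b) q) ∧ max (t q) (u (!b) q) ≤ L := by omega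
      cases b <;> simpa [S, lab, hq] using this
  have hinj : Set.InjOn (fun q => (c q, lab q)) (Finset.univ : Finset (Fin N)) := by
    intro p _ q _ hpq
    simp only [Prod.mk.injEq] at hpq
    rcases lt_trichotomy p q with h | h | h
    · exact absurd hpq.2 (lab_lt p q h hpq.1).ne
    · exact h
    · exact absurd hpq.2 (lab_lt q p h hpq.1.symm).ne'
  simpa using (Finset.card_le_card_of_injOn _ hmap hinj).trans hS

/-- The first `k + 1` values of `g` are increasing, and the colour of consecutive pairs can change
only at positions of the same parity as `e`. -/
def TurnsAtParity {N : ℕ} (r : Fin N → Fin N → Bool) (g : ℕ → Fin N) (k e : ℕ) : Prop :=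
  StrictMonoOn g (Set.Iic k) ∧ ∀ i, i + 1 < k → (i + 1 + e) % 2 = 1 →
    r (g i) (g (i + 1)) = r (g (i + 1)) (g (i + 2))

/-- Some path with `k` steps ends at `q` and may change colour there. -/
def EndsFree {N : ℕ} (r : Fin N → Fin N → Bool) (q : Fin N) (k : ℕ) : Prop :=
  ∃ g, g k = q ∧ TurnsAtParity r g k k

/-- Some path with `k` steps ends at `q` and has to continue with colour `b`. -/
def EndsForced {N : ℕ} (r : Fin N → Fin N → Bool) (b : Bool) (q : Fin N) (k : ℕ) : Prop :=
  ∃ g, g k = q ∧ TurnsAtParity r g k (k + 1) ∧ ∀ i, i + 1 = k → r (g i) (g k) = b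

section Paths

variable {N : ℕ} {r : Fin N → Fin N → Bool} {b : Bool} {p q : Fin N} {k : ℕ}

theorem strictMonoOn_update_succ {g : ℕ → Fin N} (hg : StrictMonoOn g (Set.Iic k))
    (hq : g k < q) : StrictMonoOn (Function.update g (k + 1) q) (Set.Iic (k + 1)) := by
  intro i hi j hj hij
  simp only [Set.mem_Iic] at hi hj
  have hik : i ≤ k := by omega
  rw [Function.update_of_ne (by omega)]
  rcases Nat.lt_or_ge k j with h | h
  · obtain rfl : j = k + 1 := by omega
    rw [Function.update_self]
    exact (hg.monotoneOn (Set.mem_Iic.2 hik) (Set.mem_Iic.2 le_rfl) hik).trans_lt hq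
  · rw [Function.update_of_ne (by omega)]
    exact hg (Set.mem_Iic.2 hik) (Set.mem_Iic.2 h) hij

theorem endsFree_zero (r : Fin N → Fin N → Bool) (q : Fin N) : EndsFree r q 0 := by
  refine ⟨fun _ => q, rfl, ?_, fun i hi => absurd hi (by omega)⟩
  intro i hi j hj hij
  simp only [Set.mem_Iic] at hi hj
  omega

theorem endsForced_zero (r : Fin N → Fin N → Bool) (b : Bool) (q : Fin N) :
    EndsForced r b q 0 := by
  refine ⟨fun _ => q, rfl, ⟨?_, fun i hi => absurd hi (by omega)⟩, fun i hi => absurd hi (by omega)⟩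
  intro i hi j hj hij
  simp only [Set.mem_Iic] at hi hj
  omega

theorem EndsFree.endsForced (h : EndsFree r p k) (hpq : p < q) :
    EndsForced r (r p q) q (k + 1) := by
  obtain ⟨g, rfl, hg, hturn⟩ := h
  refine ⟨Function.update g (k + 1) q, Function.update_self ..,
    ⟨strictMonoOn_update_succ hg hpq, fun i hi hpar => ?_⟩, fun i hi => ?_⟩
  · have hik : i + 1 < k := by omega
    rw [Function.update_of_ne (by omega), Function.update_of_ne (by omega),
      Function.update_of_ne (by omega)]
    exact hturn i hik (by omega)
  · obtain rfl : i = k := by omega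
    rw [Function.update_of_ne (by omega), Function.update_self]

theorem EndsForced.endsFree (h : EndsForced r (r p q) p k) (hpq : p < q) :
    EndsFree r q (k + 1) := by
  obtain ⟨g, rfl, ⟨hg, hturn⟩, hlast⟩ := h
  refine ⟨Function.update g (k + 1) q, Function.update_self ..,
    strictMonoOn_update_succ hg hpq, fun i hi hpar => ?_⟩
  rw [Function.update_of_ne (a := i) (by omega), Function.update_of_ne (a := i + 1) (by omega)]
  rcases Nat.lt_or_ge (i + 1) k with hik | hik
  · rw [Function.update_of_ne (by omega)]
    exact hturn i hik (by omega)
  · obtain rfl : k = i + 1 := by omega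
    rw [Function.update_self]
    exact hlast i rfl

theorem EndsForced.exists_endsFree (h : EndsForced r b q (k + 1)) :
    ∃ p < q, EndsFree r p k := by
  obtain ⟨g, rfl, ⟨hg, hturn⟩, -⟩ := h
  refine ⟨g k, hg (by simp) (by simp) (by omega), g, rfl,
    hg.mono (Set.Iic_subset_Iic.2 (by omega)), fun i hi hpar => hturn i (by omega) (by omega)⟩

end Paths

theorem exists_greatest_of_bounded {P : ℕ → Prop} {L : ℕ} (h0 : P 0) (hL : ∀ k, P k → k ≤ L) :
    ∃ k, P k ∧ ∀ l, P l → l ≤ k := by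
  classical
  exact ⟨Nat.findGreatest P L, Nat.findGreatest_spec (Nat.zero_le L) h0,
    fun l hl => Nat.le_findGreatest (hL l hl) hl⟩

/-- In any 2-colouring of the pairs of `3 * L + 2` ordered points there is a path with more than
`L` steps whose colour changes only at positions of one parity. -/
theorem exists_turnsAtParity {N L : ℕ} (hN : 3 * L + 2 ≤ N) (r : Fin N → Fin N → Bool) :
    ∃ g k e, L < k ∧ TurnsAtParity r g k e := by
  by_contra! hcon
  have hfree : ∀ q k, EndsFree r q k → k ≤ L := by
    rintro q k ⟨g, -, hg⟩
    by_contra! hk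
    exact hcon g k k hk hg
  have hforced : ∀ b q k, EndsForced r b q k → k ≤ L := by
    rintro b q k ⟨g, -, hg, -⟩
    by_contra! hk
    exact hcon g k (k + 1) hk hg
  choose t ht htmax using fun q => exists_greatest_of_bounded (endsFree_zero r q) (hfree q)
  choose u hu humax using fun b q =>
    exists_greatest_of_bounded (endsForced_zero r b q) (hforced b q)
  have := card_le_of_bounded_labels r t u (fun q => hfree q _ (ht q))
    (fun b q => hforced b q _ (hu b q))
    (fun p q hpq => humax _ _ _ ((ht p).endsForced hpq))
    (fun p q hpq => htmax _ _ ((hu _ p).endsFree hpq))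
    (fun b q => by
      have h := hu b q
      rcases hk : u b q with _ | k
      · exact Or.inl rfl
      · rw [hk] at h
        obtain ⟨p, hp, hpk⟩ := h.exists_endsFree
        exact Or.inr ⟨p, hp, Nat.succ_le_succ (htmax p k hpk)⟩)
  omega

section Runs

variable {m : ℕ} {t : Fin m → ℝ} {i j : Fin m}

theorem IsRun.neg (h : IsRun t i j) : IsRun (-t) i j := by
  have hm : ∀ a b, StrictMonoOn (-t) (Set.Icc a b) ↔ StrictAntiOn t (Set.Icc a b) := fun a b => by
    simp [StrictMonoOn, StrictAntiOn]
  have ha : ∀ a b, StrictAntiOn (-t) (Set.Icc a b) ↔ StrictMonoOn t (Set.Icc a b) := fun a b => by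
    simp [StrictMonoOn, StrictAntiOn]
  obtain ⟨hij, hmono, hmax⟩ := h
  refine ⟨hij, ?_, fun i' j' hi hj hne => ?_⟩
  · rw [hm, ha]
    exact hmono.symm
  · rw [hm, ha, or_comm]
    exact hmax i' j' hi hj hne

theorem IsRun.lt (ht : Function.Injective t) (h : IsRun t i j) (hj : (j : ℕ) ≠ m - 1) :
    i < j := by
  obtain ⟨hij, -, hmax⟩ := h
  refine lt_of_le_of_ne hij ?_
  rintro rfl
  have hlt : (i : ℕ) + 1 < m := by omega
  refine hmax i ⟨i + 1, hlt⟩ le_rfl (Fin.le_def.2 (by simp)) (Or.inr (by simp [Fin.ext_iff])) ?_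
  have hcases : ∀ x y : Fin m, x ∈ Set.Icc i ⟨i + 1, hlt⟩ → y ∈ Set.Icc i ⟨i + 1, hlt⟩ → x < y →
      x = i ∧ y = ⟨i + 1, hlt⟩ := by
    rintro x y ⟨hx, -⟩ ⟨-, hy⟩ hxy
    simp only [Fin.le_def, Fin.lt_def, Fin.ext_iff] at *
    omega
  rcases lt_or_gt_of_ne (ht.ne (show i ≠ ⟨i + 1, hlt⟩ by simp [Fin.ext_iff])) with hc | hc
  · left
    intro x hx y hy hxy
    obtain ⟨rfl, rfl⟩ := hcases x y hx hy hxy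
    exact hc
  · right
    intro x hx y hy hxy
    obtain ⟨rfl, rfl⟩ := hcases x y hx hy hxy
    exact hc

theorem IsRun.not_lt_of_strictMonoOn (h : IsRun t i j) (hmono : StrictMonoOn t (Set.Icc i j))
    {a : Fin m} (ha : (a : ℕ) + 1 = i) : ¬ t a < t i := by
  intro hlt
  obtain ⟨hij, -, hmax⟩ := h
  refine hmax a j (Fin.le_def.2 (by omega)) le_rfl
    (Or.inl (by simp only [ne_eq, Fin.ext_iff]; omega)) (Or.inl ?_)
  rintro x ⟨hax, hxj⟩ y ⟨-, hyj⟩ hxy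
  have hiy : i ≤ y := by
    simp only [Fin.le_def, Fin.lt_def] at *
    omega
  rcases eq_or_lt_of_le hax with rfl | hax
  · exact hlt.trans_le (hmono.monotoneOn ⟨le_rfl, hij⟩ ⟨hiy, hyj⟩ hiy)
  · refine hmono ⟨?_, hxj⟩ ⟨hiy, hyj⟩ hxy
    simp only [Fin.le_def, Fin.lt_def] at *
    omega

theorem IsRun.not_gt_of_strictMonoOn (h : IsRun t i j) (hmono : StrictMonoOn t (Set.Icc i j))
    {a : Fin m} (ha : (a : ℕ) = j + 1) : ¬ t j < t a := by
  intro hlt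
  obtain ⟨hij, -, hmax⟩ := h
  refine hmax i a le_rfl (Fin.le_def.2 (by omega))
    (Or.inr (by simp only [ne_eq, Fin.ext_iff]; omega)) (Or.inl ?_)
  rintro x ⟨hix, -⟩ y ⟨-, hya⟩ hxy
  have hxj : x ≤ j := by
    simp only [Fin.le_def, Fin.lt_def] at *
    omega
  rcases eq_or_lt_of_le hya with rfl | hya
  · exact (hmono.monotoneOn ⟨hix, hxj⟩ ⟨hij, le_rfl⟩ hxj).trans_lt hlt
  · refine hmono ⟨hix, hxj⟩ ⟨hix.trans hxy.le, ?_⟩ hxy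
    simp only [Fin.le_def, Fin.lt_def] at *
    omega

/-- At both ends of an inner run the sequence changes direction. -/
theorem IsRun.turns (ht : Function.Injective t) (h : IsRun t i j) {a a' b b' : Fin m}
    (ha : (a : ℕ) + 1 = i) (ha' : (a' : ℕ) = i + 1) (hb : (b : ℕ) + 1 = j) (hb' : (b' : ℕ) = j + 1) :
    ¬ (t a < t i ↔ t i < t a') ∧ ¬ (t b < t j ↔ t j < t b') := by
  have hij : i < j := h.lt ht (by omega)
  have increasing : ∀ t : Fin m → ℝ, IsRun t i j → StrictMonoOn t (Set.Icc i j) →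
      (¬ t a < t i ∧ t i < t a') ∧ (t b < t j ∧ ¬ t j < t b') := by
    intro t h hmono
    refine ⟨⟨h.not_lt_of_strictMonoOn hmono ha, hmono ?_ ?_ ?_⟩, hmono ?_ ?_ ?_,
      h.not_gt_of_strictMonoOn hmono hb'⟩ <;>
    simp only [Set.mem_Icc, Fin.le_def, Fin.lt_def] at * <;> omega
  rcases h.2.1 with hmono | hanti
  · have := increasing t h hmono
    tauto
  · have := increasing (-t) h.neg hanti.neg
    simp only [Pi.neg_apply, neg_lt_neg_iff, not_lt] at this
    obtain ⟨⟨h1, h2⟩, h3, h4⟩ := this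
    have h1' : t a ≠ t i := ht.ne (by simp only [ne_eq, Fin.ext_iff]; omega)
    have h4' : t j ≠ t b' := ht.ne (by simp only [ne_eq, Fin.ext_iff]; omega)
    have := lt_of_le_of_ne h1 h1'
    grind

end Runs

/-- For every `n ≥ 4`, every sequence of at least `3n − 3` distinct real
numbers contains a subsequence `R'` of length at least `n` in which every
run, except possibly the first and the last, has odd length at least 3. -/
theorem statement8 (n : ℕ) (hn : 4 ≤ n) (N : ℕ) (hN : 3 * n - 3 ≤ N)
    (s : Fin N → ℝ) (hs : Function.Injective s) :
    ∃ (m : ℕ) (f : Fin m → Fin N), StrictMono f ∧ Function.Injective (s ∘ f) ∧ n ≤ m ∧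
      ∀ i j : Fin m, IsRun (s ∘ f) i j → (i : ℕ) ≠ 0 → (j : ℕ) ≠ m - 1 →
        Odd ((j : ℕ) - (i : ℕ) + 1) ∧ 3 ≤ (j : ℕ) - (i : ℕ) + 1 := by
  obtain ⟨g, k, e, hk, hg, hturn⟩ := exists_turnsAtParity (L := n - 2) (N := N) (by omega)
    fun p q => decide (s p < s q)
  let f : Fin (k + 1) → Fin N := fun i => g i
  have hf : StrictMono f := fun i j hij =>
    hg (Set.mem_Iic.2 (by omega)) (Set.mem_Iic.2 (by omega)) hij
  have hsf : Function.Injective (s ∘ f) := hs.comp hf.injective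
  refine ⟨k + 1, f, hf, hsf, by omega, fun i j hrun hi hj => ?_⟩
  have hij : (i : ℕ) < j := hrun.lt hsf hj
  have hjk : (j : ℕ) < k := by omega
  obtain ⟨hti, htj⟩ := hrun.turns hsf (a := ⟨i - 1, by omega⟩) (a' := ⟨i + 1, by omega⟩)
    (b := ⟨j - 1, by omega⟩) (b' := ⟨j + 1, by omega⟩) (by simp; omega) rfl (by simp; omega) rfl
  have parity : ∀ x : ℕ, 0 < x → x < k →
      ¬ (s (g (x - 1)) < s (g x) ↔ s (g x) < s (g (x + 1))) → (x + e) % 2 = 0 := by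
    intro x hx hxk hne
    by_contra hpar
    obtain ⟨y, rfl⟩ : ∃ y, x = y + 1 := ⟨x - 1, by omega⟩
    exact hne (by simpa using hturn y hxk (by omega))
  have hpi := parity i (by omega) (by omega) hti
  have hpj := parity j (by omega) hjk htj
  exact ⟨Nat.odd_iff.2 (by omega), by omega⟩
end

section
/- Every sequence of n ≥ 1 distinct real numbers contains two subsequences R₁ and R₂, each a pseudo-rollercoaster, such that both R₁ and R₂ contain the first element of the sequence, every index except possibly the last index belongs to the index set of at least one of R₁, R₂, and consequently the lengths of R₁ and R₂ sum to at least n. -/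
/-- A *pseudo-rollercoaster* is a finite sequence of distinct real numbers in
which every run, except possibly the first run, has length at least 3. -/
def IsPseudoRollercoaster {m : ℕ} (t : Fin m → ℝ) : Prop :=
  Function.Injective t ∧
  ∀ i j : Fin m, IsRun t i j → (i : ℕ) ≠ 0 → (i : ℕ) + 2 ≤ (j : ℕ)

/-- `Below s d i j` compares the values of `s` at `i` and `j`: it means `s i < s j` when `d` is
`true`, and the reverse inequality when `d` is `false`. -/
def Below {n : ℕ} (s : Fin n → ℝ) (d : Bool) (i j : Fin n) : Prop :=
  if d then s i < s j else s j < s i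

namespace Below

variable {n : ℕ} {s : Fin n → ℝ} {d : Bool} {i j k : Fin n}

theorem trans (h : Below s d i j) (h' : Below s d j k) : Below s d i k := by
  cases d <;> simp only [Below] at * <;> grind

theorem not_iff : Below s (!d) i j ↔ Below s d j i := by
  cases d <;> simp [Below]

theorem total (hs : Function.Injective s) (d : Bool) (h : i ≠ j) :
    Below s d i j ∨ Below s d j i := by
  have := hs.ne h
  cases d <;> simp only [Below] <;> grind

end Below

/-- `Coaster s d l` says that `l`, a list of indices with the latest one at its head, starts at the
index `0` and is built by extending the last run or by starting a new run with two terms at once,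
the last run having direction `d`. -/
inductive Coaster {n : ℕ} (s : Fin n → ℝ) : Bool → List (Fin n) → Prop
  | single (d : Bool) (i : Fin n) (h : (i : ℕ) = 0) : Coaster s d [i]
  | extend {d : Bool} {i j : Fin n} {l : List (Fin n)} (h : Coaster s d (i :: l)) (hij : i < j)
      (hv : Below s d i j) : Coaster s d (j :: i :: l)
  | turn {d : Bool} {i j k : Fin n} {l : List (Fin n)} (h : Coaster s (!d) (i :: l))
      (hij : i < j) (hjk : j < k) (hv : Below s d i j) (hw : Below s d j k) :
      Coaster s d (k :: j :: i :: l)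

namespace Coaster

variable {n : ℕ} {s : Fin n → ℝ} {d : Bool} {l : List (Fin n)}

theorem zero_mem (h : Coaster s d l) (hn : 0 < n) : (⟨0, hn⟩ : Fin n) ∈ l := by
  induction h with
  | single d i h => simp [Fin.ext_iff, h]
  | extend _ _ _ ih => exact List.mem_cons_of_mem _ ih
  | turn _ _ _ _ _ ih => exact List.mem_cons_of_mem _ (List.mem_cons_of_mem _ ih)

theorem isChain (h : Coaster s d l) : l.IsChain (· > ·) := by
  induction h with
  | single d i h => simp
  | extend _ _ _ ih => simp_all
  | turn _ _ _ _ _ ih => simp_all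

theorem strictAnti (h : Coaster s d l) : StrictAnti l.get := by
  have := List.isChain_iff_pairwise.1 h.isChain
  intro i j hij
  exact List.pairwise_iff_get.1 this i j hij

theorem below_head {i j : Fin n} (h : Coaster s d (j :: i :: l)) : Below s d i j := by
  cases h <;> assumption

/-- Of two overlapping triples of consecutive terms, the later one is monotone if the earlier one
is not. -/
theorem monotone_triple (h : Coaster s d l) (p : ℕ) {i j k : Fin n} (hk : l[p]? = some k)
    (hj : l[p + 1]? = some j) (hi : l[p + 2]? = some i) :
    (∃ e, Below s e i j ∧ Below s e j k) ∨
      ∃ q w, p = q + 1 ∧ l[q]? = some w ∧ ∃ e, Below s e j k ∧ Below s e k w := by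
  induction h generalizing p i j k with
  | single d i h => simp at hj
  | @extend d a b l h hab hv ih =>
    rcases p with _ | p
    · rcases l with _ | ⟨c, l⟩
      · simp at hi
      · simp at hi hj hk
        subst hi hj hk
        exact Or.inl ⟨d, h.below_head, hv⟩
    · simp only [List.getElem?_cons_succ] at hi hj hk
      rcases ih p hk hj hi with h1 | ⟨q, w, rfl, hw, h1⟩
      · exact Or.inl h1
      · exact Or.inr ⟨q + 1, w, rfl, by simpa using hw, h1⟩
  | @turn d a b c l h hab hbc hv hw ih =>
    rcases p with _ | _ | p
    · simp at hi hj hk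
      subst hi hj hk
      exact Or.inl ⟨d, hv, hw⟩
    · simp at hi hj hk
      subst hj hk
      exact Or.inr ⟨0, c, rfl, by simp, d, hv, hw⟩
    · simp only [List.getElem?_cons_succ] at hi hj hk
      rcases ih p hk hj hi with h1 | ⟨q, w, rfl, hw, h1⟩
      · exact Or.inl h1
      · exact Or.inr ⟨q + 2, w, rfl, by simpa using hw, h1⟩

end Coaster

theorem strictMonoOn_or_strictAntiOn_pair {m : ℕ} {t : Fin m → ℝ} (ht : Function.Injective t)
    {i j : Fin m} (hij : (i : ℕ) + 1 = j) :
    StrictMonoOn t (Set.Icc i j) ∨ StrictAntiOn t (Set.Icc i j) := by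
  have key : ∀ a b : Fin m, a ∈ Set.Icc i j → b ∈ Set.Icc i j → a < b → a = i ∧ b = j := by
    intro a b ha hb hab
    simp only [Set.mem_Icc, Fin.le_def, Fin.lt_def, Fin.ext_iff] at *
    omega
  have hne : i ≠ j := by rintro rfl; omega
  rcases lt_or_gt_of_ne (ht.ne hne) with h | h
  · left
    intro a ha b hb hab
    obtain ⟨rfl, rfl⟩ := key a b ha hb hab
    exact h
  · right
    intro a ha b hb hab
    obtain ⟨rfl, rfl⟩ := key a b ha hb hab
    exact h

theorem strictMonoOn_or_strictAntiOn_triple {m : ℕ} {t : Fin m → ℝ}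
    {i j k : Fin m} (hij : (i : ℕ) + 1 = j) (hjk : (j : ℕ) + 1 = k)
    (h : (t i < t j ∧ t j < t k) ∨ (t j < t i ∧ t k < t j)) :
    StrictMonoOn t (Set.Icc i k) ∨ StrictAntiOn t (Set.Icc i k) := by
  have key : ∀ a b : Fin m, a ∈ Set.Icc i k → b ∈ Set.Icc i k → a < b →
      (a = i ∧ b = j) ∨ (a = i ∧ b = k) ∨ (a = j ∧ b = k) := by
    intro a b ha hb hab
    simp only [Set.mem_Icc, Fin.le_def, Fin.lt_def, Fin.ext_iff] at *
    omega
  rcases h with ⟨h, h'⟩ | ⟨h, h'⟩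
  · left
    intro a ha b hb hab
    obtain ⟨rfl, rfl⟩ | ⟨rfl, rfl⟩ | ⟨rfl, rfl⟩ := key a b ha hb hab <;> linarith
  · right
    intro a ha b hb hab
    obtain ⟨rfl, rfl⟩ | ⟨rfl, rfl⟩ | ⟨rfl, rfl⟩ := key a b ha hb hab <;> linarith

/-- Monotonicity of one of every two overlapping triples of consecutive terms, with the later triple
existing whenever the earlier one is not monotone, yields a pseudo-rollercoaster. -/
theorem isPseudoRollercoaster_of_triples {m : ℕ} {t : Fin m → ℝ} (ht : Function.Injective t)
    (h : ∀ i j k : Fin m, (i : ℕ) + 1 = j → (j : ℕ) + 1 = k →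
      ((t i < t j ∧ t j < t k) ∨ (t j < t i ∧ t k < t j)) ∨
      ∃ w : Fin m, (k : ℕ) + 1 = w ∧ ((t j < t k ∧ t k < t w) ∨ (t k < t j ∧ t w < t k))) :
    IsPseudoRollercoaster t := by
  refine ⟨ht, fun i j hrun hi => ?_⟩
  obtain ⟨hij, -, hmax⟩ := hrun
  by_contra! hlt
  let p : Fin m := ⟨i - 1, by omega⟩
  have hp : (p : ℕ) + 1 = i := by simp only [p]; omega
  have hpi : p ≤ i := by rw [Fin.le_def]; omega
  have hip : i ≠ p := by rw [Ne, Fin.ext_iff]; omega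
  rw [Fin.le_def] at hij
  rcases Nat.eq_or_lt_of_le hij with hij' | hij'
  · have : i = j := Fin.ext hij'
    subst this
    exact hmax p i hpi le_rfl (Or.inl hip) (strictMonoOn_or_strictAntiOn_pair ht hp)
  · have hj : (i : ℕ) + 1 = j := by omega
    rcases h p i j hp hj with h1 | ⟨w, hw, h1⟩
    · exact hmax p j hpi le_rfl (Or.inl hip) (strictMonoOn_or_strictAntiOn_triple hp hj h1)
    · refine hmax i w le_rfl (by rw [Fin.le_def]; omega) (Or.inr ?_)
        (strictMonoOn_or_strictAntiOn_triple hj hw h1)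
      rw [Ne, Fin.ext_iff]; omega

theorem Coaster.isPseudoRollercoaster {n : ℕ} {s : Fin n → ℝ} (hs : Function.Injective s)
    {d : Bool} {l : List (Fin n)} (h : Coaster s d l) :
    IsPseudoRollercoaster (s ∘ (l.get ∘ Fin.rev)) := by
  have below : ∀ {a b c : Fin n}, (∃ e, Below s e a b ∧ Below s e b c) →
      (s a < s b ∧ s b < s c) ∨ (s b < s a ∧ s c < s b) := by
    rintro a b c ⟨_ | _, h1, h2⟩
    · exact Or.inr ⟨by simpa [Below] using h1, by simpa [Below] using h2⟩
    · exact Or.inl ⟨by simpa [Below] using h1, by simpa [Below] using h2⟩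
  refine isPseudoRollercoaster_of_triples
    (hs.comp (h.strictAnti.injective.comp Fin.rev_injective)) fun i j k hij hjk => ?_
  have hget : ∀ a : Fin l.length, l[(Fin.rev a : ℕ)]? = some (l.get (Fin.rev a)) := by simp
  have hj : (Fin.rev j : ℕ) = Fin.rev k + 1 := by simp only [Fin.val_rev]; omega
  have hi : (Fin.rev i : ℕ) = Fin.rev k + 2 := by simp only [Fin.val_rev]; omega
  rcases h.monotone_triple (Fin.rev k) (hget k) (hj ▸ hget j) (hi ▸ hget i) with
    h1 | ⟨q, w, hq, hw, h1⟩
  · exact Or.inl (below h1)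
  · obtain ⟨hql, rfl⟩ := List.getElem?_eq_some_iff.1 hw
    refine Or.inr ⟨Fin.rev ⟨q, hql⟩, ?_, ?_⟩
    · simp only [Fin.val_rev] at hq ⊢; omega
    · simpa using below h1

/-- The first `k` indices are covered by two coasters, one ending upwards and one downwards. -/
def Settled {n : ℕ} (s : Fin n → ℝ) (k : ℕ) : Prop :=
  ∃ (a b : Fin n) (A B : List (Fin n)),
    Coaster s true (a :: A) ∧ Coaster s false (b :: B) ∧ (a : ℕ) < k ∧ (b : ℕ) < k ∧
    ∀ i : Fin n, (i : ℕ) < k → i ∈ a :: A ∨ i ∈ b :: B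

/-- The first `k` indices but the last, `x`, are covered by two coasters with ends of opposite
directions, neither of which can be extended by `x`. -/
def Pending {n : ℕ} (s : Fin n → ℝ) (k : ℕ) : Prop :=
  ∃ (a b x : Fin n) (A B : List (Fin n)),
    Coaster s true (a :: A) ∧ Coaster s false (b :: B) ∧ a < x ∧ b < x ∧ (x : ℕ) + 1 = k ∧
    Below s true b x ∧ Below s true x a ∧ ∀ i : Fin n, i < x → i ∈ a :: A ∨ i ∈ b :: B

/-- The first `k` indices are covered by two coasters with ends `r` and `b` of the same
direction `d`. Relative to `d`, the list `r :: R` ends in the successive records and `u :: N` in the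
other terms; `p :: P` is the part of `r :: R` before `u`, and `b :: B` extends `u :: N` by the
records after `u`. -/
def Parallel {n : ℕ} (s : Fin n → ℝ) (d : Bool) (k : ℕ) : Prop :=
  ∃ (r b p u : Fin n) (R B P N : List (Fin n)),
    Coaster s d (r :: R) ∧ Coaster s d (b :: B) ∧ Coaster s d (p :: P) ∧
    (∀ z, u < z → Below s d u z → Coaster s d (z :: u :: N)) ∧
    (r : ℕ) < k ∧ (b : ℕ) < k ∧ (u : ℕ) < k ∧ p < u ∧
    (b = r ∨ Below s d b r) ∧ Below s d u p ∧
    (∀ i : Fin n, (i : ℕ) < k → i ∈ b :: B ∨ i ∈ u :: p :: P) ∧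
    (∀ i : Fin n, (i : ℕ) < k → i ∈ r :: R ∨ i ∈ u :: N) ∧
    ∀ i : Fin n, (i : ℕ) < k → i ∈ r :: R ∨ i ∈ b :: B

section Step

variable {n : ℕ} {s : Fin n → ℝ} {k : ℕ}

theorem Settled.of_coasters {d : Bool} {a b : Fin n} {A B : List (Fin n)}
    (hA : Coaster s d (a :: A)) (hB : Coaster s (!d) (b :: B)) (ha : (a : ℕ) < k)
    (hb : (b : ℕ) < k) (hc : ∀ i : Fin n, (i : ℕ) < k → i ∈ a :: A ∨ i ∈ b :: B) :
    Settled s k := by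
  cases d
  · exact ⟨b, a, B, A, hB, hA, hb, ha, fun i hi => (hc i hi).symm⟩
  · exact ⟨a, b, A, B, hA, hB, ha, hb, hc⟩

theorem Settled.step (hs : Function.Injective s) (hk : k < n) (h : Settled s k) :
    Settled s (k + 1) ∨ Pending s (k + 1) := by
  obtain ⟨a, b, A, B, hA, hB, ha, hb, hc⟩ := h
  let z : Fin n := ⟨k, hk⟩
  have haz : a < z := ha
  have hbz : b < z := hb
  have hz : ∀ i : Fin n, (i : ℕ) < k + 1 → (i : ℕ) < k ∨ i = z := fun i hi => by
    simp only [z, Fin.ext_iff]; omega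
  rcases Below.total hs true haz.ne with h1 | h1
  · exact Or.inl ⟨z, b, a :: A, B, hA.extend haz h1, hB, by simp [z], by omega, by grind⟩
  · rcases Below.total hs false hbz.ne with h2 | h2
    · exact Or.inl ⟨a, z, A, b :: B, hA, hB.extend hbz h2, by omega, by simp [z], by grind⟩
    · exact Or.inr ⟨a, b, z, A, B, hA, hB, haz, hbz, rfl, Below.not_iff.1 h2, h1,
        fun i hi => hc i hi⟩

theorem Parallel.of_pending (hs : Function.Injective s) {d : Bool} {a b x z : Fin n}
    {A B : List (Fin n)} (hA : Coaster s d (a :: A)) (hB : Coaster s (!d) (b :: B))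
    (hax : a < x) (hbx : b < x) (hxk : (x : ℕ) + 1 = k) (hzk : (z : ℕ) = k)
    (hv : Below s d b x) (hz : Below s d x z)
    (hw : Below s d x a) (hc : ∀ i : Fin n, i < x → i ∈ a :: A ∨ i ∈ b :: B) :
    Parallel s d (k + 1) := by
  have hxz : x < z := by rw [Fin.lt_def]; omega
  have haz : a < z := hax.trans hxz
  have hcov : ∀ i : Fin n, (i : ℕ) < k + 1 → i < x ∨ i = x ∨ i = z := fun i hi => by
    simp only [Fin.ext_iff, Fin.lt_def]; omega
  have ha : (a : ℕ) < k + 1 := by rw [Fin.lt_def] at haz; omega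
  have hBx := hB.turn hbx hxz hv hz
  rcases Below.total hs d haz.ne with h | h
  · refine ⟨z, z, a, x, a :: A, x :: b :: B, A, b :: B, hA.extend haz h, hBx, hA,
      fun w hxw hw => hB.turn hbx hxw hv hw, by omega, by omega, by omega, hax, Or.inl rfl, hw,
      ?_, ?_, ?_⟩ <;> grind
  · refine ⟨a, z, a, z, A, x :: b :: B, A, x :: b :: B, hA, hBx, hA,
      fun w hxw hw => hBx.extend hxw hw, ha, by omega, by omega, haz, Or.inr h, h,
      ?_, ?_, ?_⟩ <;> grind

theorem Pending.step (hs : Function.Injective s) (hk : k < n) (h : Pending s k) :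
    ∃ d, Parallel s d (k + 1) := by
  obtain ⟨a, b, x, A, B, hA, hB, hax, hbx, hxk, hv, hw, hc⟩ := h
  have hne : x ≠ ⟨k, hk⟩ := by simp only [Ne, Fin.ext_iff]; omega
  rcases Below.total hs true hne with h1 | h1
  · exact ⟨true, Parallel.of_pending hs hA hB hax hbx hxk rfl hv h1 hw hc⟩
  · exact ⟨false, Parallel.of_pending hs hB hA hbx hax hxk rfl (Below.not_iff.2 hw)
      (Below.not_iff.2 h1) (Below.not_iff.2 hv) fun i hi => (hc i hi).symm⟩

theorem Parallel.step (hs : Function.Injective s) (hk : k < n) {d : Bool}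
    (h : Parallel s d k) : Settled s (k + 1) ∨ Parallel s d (k + 1) := by
  obtain ⟨r, b, p, u, R, B, P, N, hR, hB, hP, hN, hr, hb, hu, hpu, hbr, hup, c1, c2, c3⟩ := h
  let z : Fin n := ⟨k, hk⟩
  have hrz : r < z := hr
  have hbz : b < z := hb
  have huz : u < z := hu
  have hzk : (z : ℕ) < k + 1 := by simp [z]
  have hcov : ∀ i : Fin n, (i : ℕ) < k + 1 → (i : ℕ) < k ∨ i = z := fun i hi => by
    simp only [z, Fin.ext_iff]; omega
  rcases Below.total hs d huz.ne with h1 | h1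
  · right
    rcases Below.total hs d hrz.ne with h2 | h2
    · have h3 : Below s d b z := hbr.elim (fun e => e ▸ h2) fun e => e.trans h2
      refine ⟨z, z, p, u, r :: R, b :: B, P, N, hR.extend hrz h2, hB.extend hbz h3, hP, hN,
        hzk, hzk, by omega, hpu, Or.inl rfl, hup, ?_, ?_, ?_⟩ <;> grind
    · refine ⟨r, z, r, z, R, u :: N, R, u :: N, hR, hN z huz h1, hR,
        fun w hw hw' => (hN z huz h1).extend hw hw', by omega, hzk, hzk, hrz, Or.inr h2, h2,
        ?_, ?_, ?_⟩ <;> grind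
  · left
    have hP' : Coaster s (!!d) (p :: P) := by rwa [Bool.not_not]
    exact Settled.of_coasters hB (hP'.turn hpu huz (Below.not_iff.2 hup) (Below.not_iff.2 h1))
      (by omega) hzk (by grind)

end Step

theorem settled_or_pending_or_parallel {n : ℕ} {s : Fin n → ℝ} (hs : Function.Injective s) (k : ℕ)
    (hk : k < n) : Settled s (k + 1) ∨ Pending s (k + 1) ∨ ∃ d, Parallel s d (k + 1) := by
  induction k with
  | zero =>
    refine Or.inl ⟨⟨0, hk⟩, ⟨0, hk⟩, [], [], .single _ _ rfl, .single _ _ rfl, by simp, by simp,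
      fun i hi => ?_⟩
    simp only [List.mem_singleton, Fin.ext_iff]
    omega
  | succ k ih =>
    rcases ih (by omega) with h | h | ⟨d, h⟩
    · exact (h.step hs hk).imp_right Or.inl
    · exact Or.inr (Or.inr (h.step hs hk))
    · exact (h.step hs hk).imp_right fun h => Or.inr ⟨d, h⟩

theorem exists_coasters {n : ℕ} (hn : 1 ≤ n) {s : Fin n → ℝ} (hs : Function.Injective s) :
    ∃ (d₁ d₂ : Bool) (l₁ l₂ : List (Fin n)), Coaster s d₁ l₁ ∧ Coaster s d₂ l₂ ∧
      ∀ i : Fin n, (i : ℕ) ≠ n - 1 → i ∈ l₁ ∨ i ∈ l₂ := by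
  have h := settled_or_pending_or_parallel hs (n - 1) (by omega)
  rw [Nat.sub_add_cancel hn] at h
  rcases h with ⟨a, b, A, B, hA, hB, -, -, hc⟩ | ⟨a, b, x, A, B, hA, hB, -, -, hx, -, -, hc⟩ |
    ⟨d, r, b, p, u, R, B, P, N, hR, hB, -, -, -, -, -, -, -, -, -, -, hc⟩
  · exact ⟨_, _, _, _, hA, hB, fun i _ => hc i i.2⟩
  · exact ⟨_, _, _, _, hA, hB, fun i hi => hc i (by rw [Fin.lt_def]; omega)⟩
  · exact ⟨_, _, _, _, hR, hB, fun i _ => hc i i.2⟩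

theorem le_length_add_length {n : ℕ} (hn : 1 ≤ n) {l₁ l₂ : List (Fin n)}
    (h₁ : (⟨0, hn⟩ : Fin n) ∈ l₁) (h₂ : (⟨0, hn⟩ : Fin n) ∈ l₂)
    (hc : ∀ i : Fin n, (i : ℕ) ≠ n - 1 → i ∈ l₁ ∨ i ∈ l₂) : n ≤ l₁.length + l₂.length := by
  have hU : n - 1 ≤ (l₁.toFinset ∪ l₂.toFinset).card := by
    have hsub : Finset.univ.erase (⟨n - 1, by omega⟩ : Fin n) ⊆ l₁.toFinset ∪ l₂.toFinset := by
      intro i hi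
      have : (i : ℕ) ≠ n - 1 := by simpa [Fin.ext_iff] using hi
      simpa using hc i this
    simpa using Finset.card_le_card hsub
  have hI : 1 ≤ (l₁.toFinset ∩ l₂.toFinset).card :=
    Finset.card_pos.2 ⟨⟨0, hn⟩, by simp [h₁, h₂]⟩
  have := Finset.card_union_add_card_inter l₁.toFinset l₂.toFinset
  have := l₁.toFinset_card_le
  have := l₂.toFinset_card_le
  omega

/-- Every sequence of `n ≥ 1` distinct real numbers contains two
pseudo-rollercoaster subsequences that both contain the first element, whose
index sets together cover all indices except possibly the last, and whose
lengths therefore sum to at least `n`. -/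
theorem statement10 (n : ℕ) (hn : 1 ≤ n) (s : Fin n → ℝ) (hs : Function.Injective s) :
    ∃ (m₁ m₂ : ℕ) (f₁ : Fin m₁ → Fin n) (f₂ : Fin m₂ → Fin n),
      StrictMono f₁ ∧ StrictMono f₂ ∧
      IsPseudoRollercoaster (s ∘ f₁) ∧ IsPseudoRollercoaster (s ∘ f₂) ∧
      (⟨0, hn⟩ : Fin n) ∈ Set.range f₁ ∧ (⟨0, hn⟩ : Fin n) ∈ Set.range f₂ ∧
      (∀ i : Fin n, (i : ℕ) ≠ n - 1 → i ∈ Set.range f₁ ∪ Set.range f₂) ∧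
      n ≤ m₁ + m₂ := by
  obtain ⟨d₁, d₂, l₁, l₂, h₁, h₂, hc⟩ := exists_coasters hn hs
  have hrange : ∀ l : List (Fin n), ∀ i, i ∈ Set.range (l.get ∘ Fin.rev) ↔ i ∈ l := by
    intro l i
    rw [Fin.rev_surjective.range_comp, Set.mem_range, List.mem_iff_get]
  refine ⟨l₁.length, l₂.length, l₁.get ∘ Fin.rev, l₂.get ∘ Fin.rev,
    h₁.strictAnti.comp Fin.rev_strictAnti, h₂.strictAnti.comp Fin.rev_strictAnti,
    h₁.isPseudoRollercoaster hs, h₂.isPseudoRollercoaster hs,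
    (hrange _ _).2 (h₁.zero_mem hn), (hrange _ _).2 (h₂.zero_mem hn),
    fun i hi => ?_, le_length_add_length hn (h₁.zero_mem hn) (h₂.zero_mem hn) hc⟩
  rw [Set.mem_union, hrange, hrange]
  exact hc i hi
end

section
/- Let r(n) denote the number of permutations of {1, 2, …, n} that are rollercoasters, and let s(n) denote the number of permutations of {1, 2, …, n} whose descent word contains neither 'aba' nor 'bab' as a contiguous factor. Then r(n) = Θ(s(n)); that is, there exist positive constants c₁, c₂ and an N such that c₁ · s(n) ≤ r(n) ≤ c₂ · s(n) for all n ≥ N. -/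
/-- The *descent word* of a sequence `t` of distinct reals: letter `i` is
`true` (the letter 'a') if `t i < t (i+1)` and `false` (the letter 'b')
otherwise. -/
noncomputable def descentWord {m : ℕ} (t : Fin m → ℝ) : Fin (m - 1) → Bool :=
  fun i => decide (t ⟨(i : ℕ), by have := i.isLt; omega⟩ <
    t ⟨(i : ℕ) + 1, by have := i.isLt; omega⟩)

/-- The descent word of `t` contains neither 'aba' nor 'bab' as a contiguous
factor. -/
def DescentWordAvoidsAbaBab {m : ℕ} (t : Fin m → ℝ) : Prop :=
  ∀ i : ℕ, ∀ _h : i + 3 ≤ m - 1,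
    ¬(descentWord t ⟨i, by omega⟩ ≠ descentWord t ⟨i + 1, by omega⟩ ∧
      descentWord t ⟨i + 1, by omega⟩ ≠ descentWord t ⟨i + 2, by omega⟩)

/-- `rollercoasterCount n` is the number of permutations of `{1,…,n}` that
are rollercoasters. -/
noncomputable def rollercoasterCount (n : ℕ) : ℕ :=
  Nat.card {π : Equiv.Perm (Fin n) // IsRollercoaster (fun i => ((π i : ℕ) : ℝ))}

/-- `avoiderCount n` is the number of permutations of `{1,…,n}` whose descent
word contains neither 'aba' nor 'bab' as a contiguous factor. -/
noncomputable def avoiderCount (n : ℕ) : ℕ :=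
  Nat.card {π : Equiv.Perm (Fin n) // DescentWordAvoidsAbaBab (fun i => ((π i : ℕ) : ℝ))}

open Equiv

/-- Four consecutive terms alternate: their descent word is `aba` or `bab`. -/
def IsZigzag (a b c d : ℕ) : Prop :=
  a < b ∧ c < b ∧ c < d ∨ b < a ∧ b < c ∧ d < c

/-- Three consecutive terms are monotone. -/
def IsMonotoneTriple (a b c : ℕ) : Prop :=
  a < b ∧ b < c ∨ b < a ∧ c < b

/-- The one-line notation of a permutation of `Fin n`, extended by zero. -/
def oneLine {n : ℕ} (π : Perm (Fin n)) (k : ℕ) : ℕ :=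
  if h : k < n then π ⟨k, h⟩ else 0

/-- No four consecutive entries of the permutation alternate. -/
def AvoidsZigzag {n : ℕ} (π : Perm (Fin n)) : Prop :=
  ∀ i, i + 3 < n →
    ¬ IsZigzag (oneLine π i) (oneLine π (i + 1)) (oneLine π (i + 2)) (oneLine π (i + 3))

/-- The permutation starts with a monotone triple. -/
def StartsMonotone {n : ℕ} (π : Perm (Fin n)) : Prop :=
  IsMonotoneTriple (oneLine π 0) (oneLine π 1) (oneLine π 2)

theorem oneLine_of_lt {n k : ℕ} (π : Perm (Fin n)) (h : k < n) : oneLine π k = π ⟨k, h⟩ :=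
  dif_pos h

theorem oneLine_ne {n i j : ℕ} (π : Perm (Fin n)) (hi : i < n) (hj : j < n) (hij : i ≠ j) :
    oneLine π i ≠ oneLine π j := by
  rw [oneLine_of_lt π hi, oneLine_of_lt π hj]
  intro h
  have := π.injective (Fin.ext h)
  simp_all

theorem oneLine_mul_of_apply_eq {n i j : ℕ} (π σ : Perm (Fin n)) (hi : i < n) (hj : j < n)
    (h : σ ⟨i, hi⟩ = ⟨j, hj⟩) : oneLine (π * σ) i = oneLine π j := by
  rw [oneLine_of_lt _ hi, oneLine_of_lt _ hj, Perm.mul_apply, h]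

theorem oneLine_mul_revPerm {n i : ℕ} (π : Perm (Fin n)) (hi : i < n) :
    oneLine (π * Fin.revPerm) i = oneLine π (n - 1 - i) := by
  apply oneLine_mul_of_apply_eq _ _ hi (by omega)
  ext
  simp
  omega

theorem AvoidsZigzag.mul_revPerm {n : ℕ} {π : Perm (Fin n)} (h : AvoidsZigzag π) :
    AvoidsZigzag (π * Fin.revPerm) := by
  intro i hi
  have := h (n - 4 - i) (by omega)
  rw [oneLine_mul_revPerm _ (by omega), oneLine_mul_revPerm _ (by omega),
    oneLine_mul_revPerm _ (by omega), oneLine_mul_revPerm _ (by omega)]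
  rw [show n - 1 - i = n - 4 - i + 3 by omega, show n - 1 - (i + 1) = n - 4 - i + 2 by omega,
    show n - 1 - (i + 2) = n - 4 - i + 1 by omega, show n - 1 - (i + 3) = n - 4 - i by omega]
  unfold IsZigzag at *
  tauto

/-- The permutations of the first four positions used to make the start monotone. -/
def headPerms (m : ℕ) : Finset (Perm (Fin (m + 10))) :=
  {1, swap 0 1, swap 1 2, swap 0 1 * swap 1 2, swap 0 1 * swap 1 2 * swap 2 3}

theorem card_headPerms_le (m : ℕ) : (headPerms m).card ≤ 5 := Finset.card_le_five

theorem headPerms_apply_of_le {m : ℕ} {σ : Perm (Fin (m + 10))} (hσ : σ ∈ headPerms m)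
    {i : Fin (m + 10)} (hi : 4 ≤ (i : ℕ)) : σ i = i := by
  have h0 : i ≠ 0 := by rintro rfl; simp at hi
  have h1 : i ≠ 1 := by rintro rfl; simp at hi
  have h2 : i ≠ 2 := by
    rintro rfl
    rw [show ((2 : Fin (m + 10)) : ℕ) = 2 from rfl] at hi
    omega
  have h3 : i ≠ 3 := by
    rintro rfl
    rw [show ((3 : Fin (m + 10)) : ℕ) = 3 from rfl] at hi
    omega
  simp only [headPerms, Finset.mem_insert, Finset.mem_singleton] at hσ
  rcases hσ with rfl | rfl | rfl | rfl | rfl <;>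
    simp [Perm.mul_apply, swap_apply_of_ne_of_ne, h0, h1, h2, h3]

theorem good_start_of_oneLine {m : ℕ} {π σ : Perm (Fin (m + 10))} (hπ : AvoidsZigzag π)
    (hσ : σ ∈ headPerms m)
    {a b c d : ℕ} (ha : oneLine (π * σ) 0 = a) (hb : oneLine (π * σ) 1 = b)
    (hc : oneLine (π * σ) 2 = c) (hd : oneLine (π * σ) 3 = d)
    (habc : IsMonotoneTriple a b c)
    (h1 : ¬ IsZigzag b c d (oneLine π 4))
    (h2 : ¬ IsZigzag c d (oneLine π 4) (oneLine π 5))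
    (h3 : ¬ IsZigzag d (oneLine π 4) (oneLine π 5) (oneLine π 6)) :
    AvoidsZigzag (π * σ) ∧ StartsMonotone (π * σ) := by
  have tail : ∀ k, 4 ≤ k → k < m + 10 → oneLine (π * σ) k = oneLine π k := fun k hk hk' =>
    oneLine_mul_of_apply_eq _ _ hk' hk' (headPerms_apply_of_le hσ hk)
  subst ha hb hc hd
  refine ⟨fun i hi => ?_, habc⟩
  have h4 := tail 4 (by omega) (by omega)
  have h5 := tail 5 (by omega) (by omega)
  have h6 := tail 6 (by omega) (by omega)
  rcases (by omega : i = 0 ∨ i = 1 ∨ i = 2 ∨ i = 3 ∨ 4 ≤ i) with rfl | rfl | rfl | rfl | h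
  · unfold IsMonotoneTriple at habc
    unfold IsZigzag
    norm_num
    omega
  · norm_num [h4]; exact h1
  · norm_num [h4, h5]; exact h2
  · norm_num [h4, h5, h6]; exact h3
  · rw [tail i (by omega) (by omega), tail (i + 1) (by omega) (by omega),
      tail (i + 2) (by omega) (by omega), tail (i + 3) (by omega) (by omega)]
    exact hπ i hi

theorem AvoidsZigzag.exists_startsMonotone {m : ℕ} {π : Perm (Fin (m + 10))}
    (hπ : AvoidsZigzag π) :
    ∃ σ ∈ headPerms m, AvoidsZigzag (π * σ) ∧ StartsMonotone (π * σ) := by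
  have z0 := hπ 0 (by omega)
  have z1 := hπ 1 (by omega)
  have z2 := hπ 2 (by omega)
  have z3 := hπ 3 (by omega)
  norm_num at z0 z1 z2 z3
  have n01 : oneLine π 0 ≠ oneLine π 1 := oneLine_ne π (by omega) (by omega) (by omega)
  have n02 : oneLine π 0 ≠ oneLine π 2 := oneLine_ne π (by omega) (by omega) (by omega)
  have n03 : oneLine π 0 ≠ oneLine π 3 := oneLine_ne π (by omega) (by omega) (by omega)
  have n12 : oneLine π 1 ≠ oneLine π 2 := oneLine_ne π (by omega) (by omega) (by omega)
  have n23 : oneLine π 2 ≠ oneLine π 3 := oneLine_ne π (by omega) (by omega) (by omega)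
  have n34 : oneLine π 3 ≠ oneLine π 4 := oneLine_ne π (by omega) (by omega) (by omega)
  have n45 : oneLine π 4 ≠ oneLine π 5 := oneLine_ne π (by omega) (by omega) (by omega)
  have d01 : (0 : Fin (m + 10)) ≠ 1 := by simp
  have d02 : (0 : Fin (m + 10)) ≠ 2 := Fin.ne_of_val_ne (by decide : (0 : ℕ) ≠ 2)
  have d03 : (0 : Fin (m + 10)) ≠ 3 := Fin.ne_of_val_ne (by decide : (0 : ℕ) ≠ 3)
  have d12 : (1 : Fin (m + 10)) ≠ 2 := Fin.ne_of_val_ne (by decide : (1 : ℕ) ≠ 2)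
  have d13 : (1 : Fin (m + 10)) ≠ 3 := Fin.ne_of_val_ne (by decide : (1 : ℕ) ≠ 3)
  have d23 : (2 : Fin (m + 10)) ≠ 3 := Fin.ne_of_val_ne (by decide : (2 : ℕ) ≠ 3)
  have key : ∀ (σ : Perm (Fin (m + 10))), σ ∈ headPerms m → ∀ (a b c d : ℕ) (ha : a < m + 10)
      (hb : b < m + 10) (hc : c < m + 10) (hd : d < m + 10),
      σ 0 = ⟨a, ha⟩ → σ 1 = ⟨b, hb⟩ → σ 2 = ⟨c, hc⟩ → σ 3 = ⟨d, hd⟩ →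
      IsMonotoneTriple (oneLine π a) (oneLine π b) (oneLine π c) →
      ¬ IsZigzag (oneLine π b) (oneLine π c) (oneLine π d) (oneLine π 4) →
      ¬ IsZigzag (oneLine π c) (oneLine π d) (oneLine π 4) (oneLine π 5) →
      ¬ IsZigzag (oneLine π d) (oneLine π 4) (oneLine π 5) (oneLine π 6) →
      ∃ σ ∈ headPerms m, AvoidsZigzag (π * σ) ∧ StartsMonotone (π * σ) := by
    intro σ hσ a b c d ha hb hc hd h0 h1 h2 h3 g0 g1 g2 g3
    exact ⟨σ, hσ, good_start_of_oneLine hπ hσ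
      (oneLine_mul_of_apply_eq π σ _ ha h0) (oneLine_mul_of_apply_eq π σ _ hb h1)
      (oneLine_mul_of_apply_eq π σ _ hc h2) (oneLine_mul_of_apply_eq π σ _ hd h3) g0 g1 g2 g3⟩
  have k1 := key 1 (by simp [headPerms]) 0 1 2 3 (by omega) (by omega) (by omega) (by omega)
    rfl rfl rfl rfl
  have k2 := key (swap 0 1) (by simp [headPerms]) 1 0 2 3 (by omega) (by omega) (by omega)
    (by omega) (swap_apply_left _ _) (swap_apply_right _ _)
    (swap_apply_of_ne_of_ne d02.symm d12.symm) (swap_apply_of_ne_of_ne d03.symm d13.symm)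
  have k3 := key (swap 1 2) (by simp [headPerms]) 0 2 1 3 (by omega) (by omega) (by omega)
    (by omega) (swap_apply_of_ne_of_ne d01 d02) (swap_apply_left _ _) (swap_apply_right _ _)
    (swap_apply_of_ne_of_ne d13.symm d23.symm)
  have k4 := key (swap 0 1 * swap 1 2) (by simp [headPerms]) 1 2 0 3 (by omega) (by omega)
    (by omega) (by omega)
    (by rw [Perm.mul_apply, swap_apply_of_ne_of_ne d01 d02, swap_apply_left]; rfl)
    (by rw [Perm.mul_apply, swap_apply_left, swap_apply_of_ne_of_ne d02.symm d12.symm]; rfl)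
    (by rw [Perm.mul_apply, swap_apply_right, swap_apply_right]; rfl)
    (by rw [Perm.mul_apply, swap_apply_of_ne_of_ne d13.symm d23.symm,
      swap_apply_of_ne_of_ne d03.symm d13.symm]; rfl)
  have k5 := key (swap 0 1 * swap 1 2 * swap 2 3) (by simp [headPerms]) 1 2 3 0 (by omega)
    (by omega) (by omega) (by omega)
    (by rw [Perm.mul_apply, Perm.mul_apply, swap_apply_of_ne_of_ne d02 d03,
      swap_apply_of_ne_of_ne d01 d02, swap_apply_left]; rfl)
    (by rw [Perm.mul_apply, Perm.mul_apply, swap_apply_of_ne_of_ne d12 d13, swap_apply_left,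
      swap_apply_of_ne_of_ne d02.symm d12.symm]; rfl)
    (by rw [Perm.mul_apply, Perm.mul_apply, swap_apply_left,
      swap_apply_of_ne_of_ne d13.symm d23.symm, swap_apply_of_ne_of_ne d03.symm d13.symm]; rfl)
    (by rw [Perm.mul_apply, Perm.mul_apply, swap_apply_right, swap_apply_right,
      swap_apply_right]; rfl)
  clear key
  generalize oneLine π 0 = x0 at *
  generalize oneLine π 1 = x1 at *
  generalize oneLine π 2 = x2 at *
  generalize oneLine π 3 = x3 at *
  generalize oneLine π 4 = x4 at *
  generalize oneLine π 5 = x5 at *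
  generalize oneLine π 6 = x6 at *
  generalize (∃ σ ∈ headPerms m, AvoidsZigzag (π * σ) ∧ StartsMonotone (π * σ)) = p at *
  clear d01 d02 d03 d12 d13 d23 hπ
  unfold IsZigzag IsMonotoneTriple at *
  grind

/-- The permutation ends with a monotone triple. -/
def EndsMonotone {n : ℕ} (π : Perm (Fin n)) : Prop :=
  IsMonotoneTriple (oneLine π (n - 1)) (oneLine π (n - 2)) (oneLine π (n - 3))

theorem AvoidsZigzag.exists_endsMonotone {m : ℕ} {π : Perm (Fin (m + 10))}
    (hπ : AvoidsZigzag π) (hs : StartsMonotone π) :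
    ∃ σ ∈ headPerms m, AvoidsZigzag (π * (Fin.revPerm * σ * Fin.revPerm)) ∧
      StartsMonotone (π * (Fin.revPerm * σ * Fin.revPerm)) ∧
      EndsMonotone (π * (Fin.revPerm * σ * Fin.revPerm)) := by
  obtain ⟨σ, hσ, hz, hm⟩ := hπ.mul_revPerm.exists_startsMonotone
  have head : ∀ k, k < 3 → oneLine (π * (Fin.revPerm * σ * Fin.revPerm)) k = oneLine π k := by
    intro k hk
    refine oneLine_mul_of_apply_eq _ _ (by omega) (by omega) ?_
    rw [Perm.mul_apply, Perm.mul_apply, headPerms_apply_of_le hσ]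
    · simp
    · simp
      omega
  refine ⟨σ, hσ, ?_, ?_, ?_⟩
  · simpa only [mul_assoc] using hz.mul_revPerm
  · unfold StartsMonotone
    rwa [head 0 (by omega), head 1 (by omega), head 2 (by omega)]
  · unfold EndsMonotone
    rw [show π * (Fin.revPerm * σ * Fin.revPerm) = π * Fin.revPerm * σ * Fin.revPerm by
      simp only [mul_assoc]]
    rw [oneLine_mul_revPerm _ (by omega), oneLine_mul_revPerm _ (by omega),
      oneLine_mul_revPerm _ (by omega), show m + 10 - 1 - (m + 10 - 1) = 0 by omega,
      show m + 10 - 1 - (m + 10 - 2) = 1 by omega, show m + 10 - 1 - (m + 10 - 3) = 2 by omega]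
    exact hm

theorem Finset.card_le_of_forall_exists_mul_mem {G : Type*} [Group G] [DecidableEq G]
    {A B S : Finset G} (h : ∀ a ∈ A, ∃ s ∈ S, a * s ∈ B) : A.card ≤ S.card * B.card := by
  have hsub : A ⊆ S.biUnion fun s => B.image (· * s⁻¹) := by
    intro a ha
    obtain ⟨s, hs, hb⟩ := h a ha
    simp only [Finset.mem_biUnion, Finset.mem_image]
    exact ⟨s, hs, a * s, hb, by simp⟩
  exact (Finset.card_le_card hsub).trans
    (Finset.card_biUnion_le_card_mul _ _ _ fun s _ => Finset.card_image_le)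

theorem card_avoidsZigzag_le (m : ℕ) :
    Nat.card {π : Perm (Fin (m + 10)) // AvoidsZigzag π} ≤
      25 * Nat.card {π : Perm (Fin (m + 10)) //
        AvoidsZigzag π ∧ StartsMonotone π ∧ EndsMonotone π} := by
  classical
  simp only [Nat.card_eq_fintype_card, Fintype.card_subtype]
  have h1 := Finset.card_le_of_forall_exists_mul_mem
    (A := Finset.univ.filter fun π : Perm (Fin (m + 10)) => AvoidsZigzag π)
    (B := Finset.univ.filter fun π => AvoidsZigzag π ∧ StartsMonotone π)
    (S := headPerms m) (by simpa using fun π hπ => AvoidsZigzag.exists_startsMonotone hπ)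
  have h2 := Finset.card_le_of_forall_exists_mul_mem
    (A := Finset.univ.filter fun π : Perm (Fin (m + 10)) => AvoidsZigzag π ∧ StartsMonotone π)
    (B := Finset.univ.filter fun π => AvoidsZigzag π ∧ StartsMonotone π ∧ EndsMonotone π)
    (S := (headPerms m).image fun σ => Fin.revPerm * σ * Fin.revPerm)
    (by simpa using fun π hπ hs => AvoidsZigzag.exists_endsMonotone hπ hs)
  have h3 := (Finset.card_image_le (s := headPerms m)
    (f := fun σ => Fin.revPerm * σ * Fin.revPerm)).trans (card_headPerms_le m)
  calc _ ≤ _ := h1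
    _ ≤ 5 * _ := Nat.mul_le_mul (card_headPerms_le m) (h2.trans (Nat.mul_le_mul_right _ h3))
    _ = _ := by ring

theorem descentWordAvoidsAbaBab_iff {n : ℕ} (π : Perm (Fin n)) :
    DescentWordAvoidsAbaBab (fun i => ((π i : ℕ) : ℝ)) ↔ AvoidsZigzag π := by
  have key : ∀ i (h : i + 3 < n),
      (¬(descentWord (fun i => ((π i : ℕ) : ℝ)) ⟨i, by omega⟩ ≠
          descentWord (fun i => ((π i : ℕ) : ℝ)) ⟨i + 1, by omega⟩ ∧
        descentWord (fun i => ((π i : ℕ) : ℝ)) ⟨i + 1, by omega⟩ ≠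
          descentWord (fun i => ((π i : ℕ) : ℝ)) ⟨i + 2, by omega⟩)) ↔
      ¬ IsZigzag (oneLine π i) (oneLine π (i + 1)) (oneLine π (i + 2)) (oneLine π (i + 3)) := by
    intro i h
    have n0 := oneLine_ne π (i := i) (j := i + 1) (by omega) (by omega) (by omega)
    have n1 := oneLine_ne π (i := i + 1) (j := i + 2) (by omega) (by omega) (by omega)
    have n2 := oneLine_ne π (i := i + 2) (j := i + 3) (by omega) (by omega) (by omega)
    simp only [descentWord, Nat.cast_lt, ne_eq, decide_eq_decide, IsZigzag]
    simp only [← oneLine_of_lt, show i + 1 + 1 = i + 2 from rfl, show i + 2 + 1 = i + 3 from rfl]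
    omega
  constructor
  · intro h i hi
    exact (key i hi).1 (h i (by omega))
  · intro h i hi
    exact (key i (by omega)).2 (h i (by omega))

theorem strictMonoOn_or_strictAntiOn_Icc {n i : ℕ} (π : Perm (Fin n)) (hi : i + 2 < n)
    (h : IsMonotoneTriple (oneLine π i) (oneLine π (i + 1)) (oneLine π (i + 2))) :
    StrictMonoOn (fun i => ((π i : ℕ) : ℝ)) (Set.Icc ⟨i, by omega⟩ ⟨i + 2, hi⟩) ∨
      StrictAntiOn (fun i => ((π i : ℕ) : ℝ)) (Set.Icc ⟨i, by omega⟩ ⟨i + 2, hi⟩) := by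
  have key : ∀ a b : Fin n, (a : ℕ) < b → i ≤ (a : ℕ) → (b : ℕ) ≤ i + 2 →
      ((a : ℕ) = i ∧ (b : ℕ) = i + 1) ∨ ((a : ℕ) = i ∧ (b : ℕ) = i + 2) ∨
        ((a : ℕ) = i + 1 ∧ (b : ℕ) = i + 2) := by
    intro a b _ _ _
    omega
  have val : ∀ a : Fin n, (π a : ℕ) = oneLine π a := fun a => (oneLine_of_lt π a.isLt).symm
  refine h.imp ?_ ?_
  all_goals
    rintro ⟨h1, h2⟩ a ha b hb hab
    simp only [Nat.cast_lt, val]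
    rcases key a b hab ha.1 hb.2 with ⟨ha', hb'⟩ | ⟨ha', hb'⟩ | ⟨ha', hb'⟩ <;>
      rw [ha', hb'] <;> omega

theorem isRollercoaster_of_startsMonotone_endsMonotone {n : ℕ} (hn : 3 ≤ n) {π : Perm (Fin n)}
    (hz : AvoidsZigzag π) (hs : StartsMonotone π) (he : EndsMonotone π) :
    IsRollercoaster (fun i => ((π i : ℕ) : ℝ)) := by
  refine ⟨hn, fun a b hab => π.injective (Fin.ext (Nat.cast_injective hab)), ?_⟩
  rintro ⟨i, hi⟩ ⟨j, hj⟩ ⟨hij, -, hmax⟩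
  by_contra! hlt
  simp only [Fin.mk_le_mk] at hij
  have no_triple : ∀ k (hk : k + 2 < n), k ≤ i → j ≤ k + 2 →
      ¬ IsMonotoneTriple (oneLine π k) (oneLine π (k + 1)) (oneLine π (k + 2)) := by
    intro k hk hki hjk htriple
    refine hmax ⟨k, by omega⟩ ⟨k + 2, hk⟩ hki hjk ?_
      (strictMonoOn_or_strictAntiOn_Icc π hk htriple)
    simp only [ne_eq, Fin.mk.injEq]
    simp only at hlt
    omega
  have hs' : IsMonotoneTriple (oneLine π 0) (oneLine π (0 + 1)) (oneLine π (0 + 2)) := hs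
  have he' : IsMonotoneTriple (oneLine π (n - 3)) (oneLine π (n - 3 + 1))
      (oneLine π (n - 3 + 2)) := by
    rw [show n - 3 + 1 = n - 2 by omega, show n - 3 + 2 = n - 1 by omega]
    unfold EndsMonotone at he
    unfold IsMonotoneTriple at *
    tauto
  simp only at hlt
  by_cases hi0 : i = 0
  · exact no_triple 0 (by omega) (by omega) (by omega) hs'
  by_cases hin : n - 2 ≤ i
  · exact no_triple (n - 3) (by omega) (by omega) (by omega) he'
  obtain ⟨k, rfl⟩ := Nat.exists_eq_succ_of_ne_zero hi0
  have t1 := no_triple k (by omega) (by omega) (by omega)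
  have t2 := no_triple (k + 1) (by omega) (by omega) (by omega)
  have t3 := hz k (by omega)
  have n0 := oneLine_ne π (i := k) (j := k + 1) (by omega) (by omega) (by omega)
  have n1 := oneLine_ne π (i := k + 1) (j := k + 2) (by omega) (by omega) (by omega)
  have n2 := oneLine_ne π (i := k + 2) (j := k + 3) (by omega) (by omega) (by omega)
  rw [show k + 1 + 1 = k + 2 from rfl, show k + 1 + 2 = k + 3 from rfl] at t2
  unfold IsMonotoneTriple at t1 t2
  unfold IsZigzag at t3
  omega

theorem avoidsZigzag_of_isRollercoaster {n : ℕ} {π : Perm (Fin n)}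
    (h : IsRollercoaster (fun i => ((π i : ℕ) : ℝ))) : AvoidsZigzag π := by
  intro k hk hz
  have val : ∀ (i : ℕ) (hi : i < n), (π ⟨i, hi⟩ : ℕ) = oneLine π i :=
    fun i hi => (oneLine_of_lt π hi).symm
  have hrun : IsRun (fun i => ((π i : ℕ) : ℝ)) ⟨k + 1, by omega⟩ ⟨k + 2, by omega⟩ := by
    refine ⟨by simp, ?_, ?_⟩
    · have key : ∀ a ∈ Set.Icc (⟨k + 1, by omega⟩ : Fin n) ⟨k + 2, by omega⟩,
          ∀ b ∈ Set.Icc (⟨k + 1, by omega⟩ : Fin n) ⟨k + 2, by omega⟩, a < b →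
          a = ⟨k + 1, by omega⟩ ∧ b = ⟨k + 2, by omega⟩ := by
        rintro ⟨a, _⟩ ha ⟨b, _⟩ hb hab
        simp only [Set.mem_Icc, Fin.mk_le_mk, Fin.mk_lt_mk, Fin.mk.injEq] at *
        omega
      rcases hz with hz | hz
      · right
        intro a ha b hb hab
        obtain ⟨rfl, rfl⟩ := key a ha b hb hab
        simpa only [Nat.cast_lt, val] using hz.2.1
      · left
        intro a ha b hb hab
        obtain ⟨rfl, rfl⟩ := key a ha b hb hab
        simpa only [Nat.cast_lt, val] using hz.2.1
    · rintro ⟨i, hi⟩ ⟨j, hj⟩ hik hkj hne hmono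
      simp only [Fin.mk_le_mk, ne_eq, Fin.mk.injEq] at hik hkj hne
      have mem : ∀ l (hl : l < n), i ≤ l → l ≤ j →
          (⟨l, hl⟩ : Fin n) ∈ Set.Icc ⟨i, hi⟩ ⟨j, hj⟩ := fun l hl h1 h2 => ⟨h1, h2⟩
      have step : ∀ l (hl : l + 1 < n), i ≤ l → l + 1 ≤ j →
          (⟨l, by omega⟩ : Fin n) < ⟨l + 1, hl⟩ := fun l hl _ _ => by simp
      rcases hmono with hmono | hmono
      all_goals
        have mono : ∀ l (hl : l + 1 < n) (h1 : i ≤ l) (h2 : l + 1 ≤ j), _ :=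
          fun l hl h1 h2 => hmono (mem l (by omega) h1 (by omega)) (mem (l + 1) hl (by omega) h2)
            (step l hl h1 h2)
        simp only [Nat.cast_lt, val] at mono
        have m1 := mono (k + 1) (by omega) (by omega) (by omega)
        rw [show k + 1 + 1 = k + 2 from rfl] at m1
        unfold IsZigzag at hz
        rcases (by omega : i ≤ k ∨ k + 3 ≤ j) with hi | hj
        · have := mono k (by omega) (by omega) (by omega)
          omega
        · have m2 := mono (k + 2) (by omega) (by omega) (by omega)
          rw [show k + 2 + 1 = k + 3 from rfl] at m2
          omega
  have := h.2.2 _ _ hrun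
  simp at this

/-- `r(n) = Θ(s(n))`: the number of rollercoaster permutations is within
constant factors of the number of permutations whose descent word avoids
'aba' and 'bab'. -/
theorem statement12 :
    ∃ c₁ c₂ : ℝ, 0 < c₁ ∧ 0 < c₂ ∧ ∃ N : ℕ, ∀ n : ℕ, N ≤ n →
      c₁ * (avoiderCount n : ℝ) ≤ (rollercoasterCount n : ℝ) ∧
      (rollercoasterCount n : ℝ) ≤ c₂ * (avoiderCount n : ℝ) := by
  refine ⟨1 / 25, 1, by norm_num, by norm_num, 10, fun n hn => ?_⟩
  obtain ⟨m, rfl⟩ := Nat.exists_eq_add_of_le' hn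
  have hlower : avoiderCount (m + 10) ≤ 25 * rollercoasterCount (m + 10) := by
    simp only [avoiderCount, descentWordAvoidsAbaBab_iff]
    refine (card_avoidsZigzag_le m).trans (Nat.mul_le_mul_left _ ?_)
    exact Nat.card_le_card_of_injective
      (Subtype.map id fun π (hπ : AvoidsZigzag π ∧ StartsMonotone π ∧ EndsMonotone π) =>
        isRollercoaster_of_startsMonotone_endsMonotone (by omega) hπ.1 hπ.2.1 hπ.2.2)
      (Subtype.map_injective _ Function.injective_id)
  have hupper : rollercoasterCount (m + 10) ≤ avoiderCount (m + 10) := by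
    simp only [avoiderCount, descentWordAvoidsAbaBab_iff]
    exact Nat.card_le_card_of_injective
      (Subtype.map id fun _ => avoidsZigzag_of_isRollercoaster)
      (Subtype.map_injective _ Function.injective_id)
  constructor
  · have : (avoiderCount (m + 10) : ℝ) ≤ 25 * rollercoasterCount (m + 10) := by
      exact_mod_cast hlower
    linarith
  · rw [one_mul]
    exact_mod_cast hupper
end
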